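/- Let Γ be a distance-regular graph with classical parameters (D, b, α, β), D ≥ 3, and intersection numbers a₁ = 0 and a₂ ≠ 0. Fix vertices x, y with ∂(x,y) = 3, set C = {z ∈ Γ₃(x) : B(x,z) = B(x,y)} and Δ = [x,C] = {v ∈ X : ∃ z ∈ C with ∂(x,v)+∂(v,z)=∂(x,z)}. Then the subgraph of Γ induced on Δ is regular with valency a₃ + c₃, is weak-geodetically closed, has diameter 3, and contains x and y. -/

import Mathlib

/-!
Common definitions: distance-regular graphs (via an intersection-number function `p`),
classical parameters, and the sets `B(x,y)`, `A(x,y)`, `C(x,y)`.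
The distance `∂` is `SimpleGraph.dist`.
-/

variable {V : Type*}

/-- `Γ` is distance-regular with intersection numbers `p h i j = p^h_{ij}`
(for indices up to the diameter `D`). -/
def SimpleGraph.IsDistRegularWith (G : SimpleGraph V) (D : ℕ) (p : ℕ → ℕ → ℕ → ℕ) : Prop :=
  ∀ h i j : ℕ, h ≤ D → i ≤ D → j ≤ D → ∀ x y : V, G.dist x y = h →
    {z : V | G.dist x z = i ∧ G.dist y z = j}.ncard = p h i j

/-- The Gaussian bracket `[i] = 1 + b + b² + ⋯ + b^{i-1}`. -/
def gaussBracket (b : ℝ) (i : ℕ) : ℝ := ∑ k ∈ Finset.range i, b ^ k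

/-- A distance-regular graph with intersection numbers `p` has classical parameters
`(D, b, α, β)`: `b ∉ {0, -1}`, `c_i = [i](1 + α[i-1])` and `b_i = ([D]-[i])(β - α[i])`
for `0 ≤ i ≤ D`, where `c_i = p^i_{1,i-1}` and `b_i = p^i_{1,i+1}`. -/
def HasClassicalParams (D : ℕ) (p : ℕ → ℕ → ℕ → ℕ) (b α β : ℝ) : Prop :=
  b ≠ 0 ∧ b ≠ -1 ∧
    (∀ i ≤ D, (p i 1 (i - 1) : ℝ) = gaussBracket b i * (1 + α * gaussBracket b (i - 1))) ∧
    (∀ i ≤ D, (p i 1 (i + 1) : ℝ) =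
      (gaussBracket b D - gaussBracket b i) * (β - α * gaussBracket b i))

/-- `B(x,y) = Γ₁(x) ∩ Γ_{∂(x,y)+1}(y)`. -/
def Bset (G : SimpleGraph V) (x y : V) : Set V :=
  {v | G.dist x v = 1 ∧ G.dist y v = G.dist x y + 1}

/-- `A(x,y) = Γ₁(x) ∩ Γ_{∂(x,y)}(y)`. -/
def Aset (G : SimpleGraph V) (x y : V) : Set V :=
  {v | G.dist x v = 1 ∧ G.dist y v = G.dist x y}

/-- `C(x,y) = Γ₁(x) ∩ Γ_{∂(x,y)-1}(y)`. -/
def Cset (G : SimpleGraph V) (x y : V) : Set V :=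
  {v | G.dist x v = 1 ∧ G.dist y v = G.dist x y - 1}

/-- `C = {z ∈ Γ₃(x) : B(x,z) = B(x,y)}`. -/
def Cclass (G : SimpleGraph V) (x y : V) : Set V :=
  {z | G.dist x z = 3 ∧ Bset G x z = Bset G x y}

/-- `Δ = [x, C] = {v : ∃ z ∈ C, ∂(x,v) + ∂(v,z) = ∂(x,z)}`. -/
def Delta (G : SimpleGraph V) (x y : V) : Set V :=
  {v | ∃ z ∈ Cclass G x y, G.dist x v + G.dist v z = G.dist x z}

/-!
For `∂(x,y) ≤ 3` let the hull of `x, y` be `H(x,y) = {z : ∂(x,z) ≤ ∂(x,y), B(x,y) ⊆ B(x,z)}`. It is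
closed under weak-geodetic sequences starting at `x`, and `Δ ⊆ H(x,y)`, so everything follows once
`H(x,y)` is shown not to depend on the choice of its base point `x`.

This independence comes from Terwilliger's tridiagonal relation. Classical parameters provide an
eigenvalue whose cosine sequence is an affine function of `b^{-i}`; hence, for every base point `w`,
the adjacency matrix and the diagonal matrix of the weights `b^{-∂(w,v)}` satisfy a cubic relation.
Its entries compare the weights of `Γ₁(u) ∩ Γⱼ(v)` and of `Γ₁(v) ∩ Γⱼ(u)`. Since `a₁ = 0 ≠ a₂`
forces `b ≤ -2`, these comparisons leave no freedom for the distances from `w`: they exclude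
parallelograms of length three and four, and they carry `H(x,y)` over to the neighbours of `x`.
-/

section

grind_pattern SimpleGraph.Connected.dist_triangle => G.dist u v, G.dist v w
grind_pattern SimpleGraph.dist_comm => G.dist u v
grind_pattern SimpleGraph.dist_self => G.dist v v

/-! ### Weakly closed hulls -/

variable {G : SimpleGraph V} {x y z w s t r u v : V}

theorem exists_dist_eq_one_of_dist_eq_add_one (hG : G.Connected) {n : ℕ}
    (h : G.dist x y = n + 1) : ∃ z, G.dist x z = 1 ∧ G.dist z y = n := by
  obtain ⟨p, hp⟩ := hG.exists_walk_length_eq_dist x y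
  cases p with
  | nil => simp at h
  | @cons _ z _ hadj q =>
    have hxz : G.dist x z = 1 := SimpleGraph.dist_eq_one_iff_adj.2 hadj
    have hq := SimpleGraph.dist_le q
    rw [SimpleGraph.Walk.length_cons] at hp
    exact ⟨z, hxz, by grind⟩

theorem Bset_subset_of_dist_add_dist_eq (hG : G.Connected)
    (h : G.dist x z + G.dist z y = G.dist x y) : Bset G x y ⊆ Bset G x z :=
  fun g hg => ⟨hg.1, by grind [Bset]⟩

theorem dist_le_of_Bset_subset (hG : G.Connected) (h : Bset G x y ⊆ Bset G x s)
    (hv : G.dist x v = 1) (hs : G.dist s v ≤ G.dist x s) : G.dist y v ≤ G.dist x y := by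
  have : v ∈ Bset G x y → _ := fun hv => (h hv).2
  grind [Bset]

/-- The hull of `y` seen from `x`: the vertices `s` no farther from `x` than `y` is, all of whose
neighbours-of-`x` in `B(x,y)` lead away from `s` as well. For `∂(x,y) = 3` it turns out to be the
set `Δ` of the theorem, and for `∂(x,y) = 2` it is the analogous set of diameter two. -/
def BHull (G : SimpleGraph V) (x y : V) : Set V :=
  {s | G.dist x s ≤ G.dist x y ∧ Bset G x y ⊆ Bset G x s}

theorem left_mem_BHull (hG : G.Connected) : x ∈ BHull G x y :=
  ⟨by simp, Bset_subset_of_dist_add_dist_eq hG (by simp)⟩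

theorem right_mem_BHull : y ∈ BHull G x y := ⟨le_rfl, subset_rfl⟩

theorem dist_eq_dist_add_one_of_mem_BHull (hxv : G.dist x v = 1)
    (hvy : G.dist v y = G.dist x y + 1) (hs : s ∈ BHull G x y) :
    G.dist v s = G.dist x s + 1 := by
  rw [SimpleGraph.dist_comm] at hvy ⊢
  exact (hs.2 ⟨hxv, hvy⟩).2

theorem Delta_subset_BHull (hG : G.Connected) (hxy : G.dist x y = 3) :
    Delta G x y ⊆ BHull G x y := by
  rintro u ⟨z, ⟨hxz, hz⟩, hu⟩
  exact ⟨by omega, hz.ge.trans (Bset_subset_of_dist_add_dist_eq hG hu)⟩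

/-- The combinatorial properties of `Γ` on which the construction of closed hulls rests: there are
no triangles and no parallelograms of length three or four (a parallelogram of length `i + 1` is
a 4-tuple `x, y, z, u` as in the field `no_parallelogram`), the size of `B(x,y)` depends only on
`∂(x,y)`, and `a₂ ≠ 0`. -/
structure IsBRigid (G : SimpleGraph V) : Prop where
  connected : G.Connected
  no_triangle : ∀ {x y z : V}, G.dist x y = 1 → G.dist y z = 1 → G.dist x z ≠ 1
  no_parallelogram : ∀ {i : ℕ}, 2 ≤ i → i ≤ 3 → ∀ {x y z u : V}, G.dist x y = 1 → G.dist z u = 1 →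
    G.dist x u = i + 1 → G.dist x z = i → G.dist y z = i → G.dist y u ≠ i
  ncard_Bset : ∀ {x y x' y' : V}, G.dist x y = G.dist x' y' →
    (Bset G x y).ncard = (Bset G x' y').ncard
  nonempty_Aset : ∀ {x y : V}, G.dist x y = 2 → (Aset G x y).Nonempty

grind_pattern IsBRigid.connected => IsBRigid G

namespace IsBRigid

theorem eq_of_dist_eq_zero (h : IsBRigid G) (hxy : G.dist x y = 0) : x = y :=
  h.connected.dist_eq_zero_iff.1 hxy

theorem Bset_eq_of_subset [Finite V] (h : IsBRigid G) (hs : Bset G x y ⊆ Bset G x s)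
    (hd : G.dist x y = G.dist x s) : Bset G x y = Bset G x s :=
  Set.eq_of_subset_of_ncard_le hs (h.ncard_Bset hd.symm).le

theorem Bset_subset_of_adj (h : IsBRigid G) (hzw : G.dist z w = 1)
    (hd : G.dist x z = G.dist x w) (h3 : G.dist x z ≤ 3) : Bset G x z ⊆ Bset G x w := by
  refine fun g ⟨hg, hgz⟩ => ⟨hg, ?_⟩
  by_cases G.dist x z = 0
  · grind [h.eq_of_dist_eq_zero]
  by_cases G.dist x z = 1
  · grind [h.no_triangle]
  have := h.no_parallelogram (i := G.dist x z) (by omega) h3 (x := g) (y := x) (z := w) (u := z)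
  grind

theorem Bset_subset_of_dist_eq_one (h : IsBRigid G) (hvs : G.dist v s = 1)
    (hys : G.dist y s ≤ G.dist v y) : Bset G v y ⊆ Bset G v s := by
  refine fun g ⟨hg, hyg⟩ => ⟨hg, ?_⟩
  have := h.no_triangle (x := s) (y := v) (z := g)
  have := h.eq_of_dist_eq_zero (x := s) (y := g)
  grind

theorem Bset_eq_of_adj [Finite V] (h : IsBRigid G) (hzw : G.dist z w = 1)
    (hd : G.dist x z = G.dist x w) (h3 : G.dist x z ≤ 3) : Bset G x z = Bset G x w :=
  h.Bset_eq_of_subset (h.Bset_subset_of_adj hzw hd h3) hd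

theorem mem_BHull_of_adj (h : IsBRigid G) (h3 : G.dist x y ≤ 3) (hs : s ∈ BHull G x y)
    (hsr : G.dist s r = 1) (hr : G.dist x r ≤ G.dist x s) : r ∈ BHull G x y := by
  refine ⟨hr.trans hs.1, hs.2.trans ?_⟩
  rcases hr.eq_or_lt with e | e
  · exact h.Bset_subset_of_adj hsr e.symm (hs.1.trans h3)
  · exact Bset_subset_of_dist_add_dist_eq h.connected (by grind)

theorem BHull_eq_of_adj [Finite V] (h : IsBRigid G) (h3 : G.dist x y ≤ 3) (hyz : G.dist y z = 1)
    (hd : G.dist x y = G.dist x z) : BHull G x y = BHull G x z := by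
  rw [BHull, BHull, h.Bset_eq_of_adj hyz hd h3, hd]

end IsBRigid

/-- Hulls of pairs at distance `k` can be transported along an edge `xv`: they do not shrink when
the base point moves from `x` to `v` at the same distance from `y`, and if `v` is closer to `y`
then `y` can first be replaced by a neighbour at distance `k` from both. -/
structure IsHullTransportable (G : SimpleGraph V) (k : ℕ) : Prop where
  BHull_subset : ∀ {x v y : V}, G.dist x v = 1 → G.dist x y = k → G.dist v y = k →
    BHull G x y ⊆ BHull G v y
  exists_adj : ∀ {x v y : V}, G.dist x v = 1 → G.dist x y = k → G.dist v y + 1 = k →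
    ∃ y', G.dist y y' = 1 ∧ G.dist x y' = k ∧ G.dist v y' = k

namespace IsHullTransportable
variable {k : ℕ}

theorem BHull_eq (hT : IsHullTransportable G k) (hxv : G.dist x v = 1) (hxy : G.dist x y = k)
    (hvy : G.dist v y = k) : BHull G x y = BHull G v y :=
  (hT.BHull_subset hxv hxy hvy).antisymm
    (hT.BHull_subset (SimpleGraph.dist_comm.trans hxv) hvy hxy)

theorem exists_BHull_eq [Finite V] (hT : IsHullTransportable G k) (h : IsBRigid G) (hk : k ≤ 3)
    (hxy : G.dist x y = k) (hs : s ∈ BHull G x y) :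
    ∃ y', G.dist s y' = k ∧ BHull G x y = BHull G s y' := by
  induction n : G.dist x s generalizing x y with
  | zero =>
    obtain rfl := h.eq_of_dist_eq_zero n
    exact ⟨y, hxy, rfl⟩
  | succ n ih =>
    obtain ⟨v, hv, hvs⟩ := exists_dist_eq_one_of_dist_eq_add_one h.connected n
    have hvy := dist_le_of_Bset_subset h.connected hs.2 hv (by grind)
    obtain ⟨y', hy', hvy', e⟩ :
        ∃ y', G.dist x y' = k ∧ G.dist v y' = k ∧ BHull G x y = BHull G x y' := by
      by_cases e : G.dist v y = k
      · exact ⟨y, hxy, e, rfl⟩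
      · obtain ⟨y', h1, h2, h3⟩ := hT.exists_adj hv hxy (by grind)
        exact ⟨y', h2, h3, h.BHull_eq_of_adj (by omega) h1 (by omega)⟩
    rw [e, hT.BHull_eq hv hy' hvy'] at hs ⊢
    exact ih hvy' hs hvs

theorem dist_le [Finite V] (hT : IsHullTransportable G k) (h : IsBRigid G) (hk : k ≤ 3)
    (hxy : G.dist x y = k) (hs : s ∈ BHull G x y) (hr : r ∈ BHull G x y) : G.dist s r ≤ k := by
  obtain ⟨y', hy', e⟩ := hT.exists_BHull_eq h hk hxy hs
  rw [e] at hr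
  exact hr.1.trans hy'.le

end IsHullTransportable

namespace IsBRigid

theorem mem_BHull_of_weakGeodetic_base (h : IsBRigid G) (hxy : G.dist x y ≤ 3)
    (hw : w ∈ BHull G x y) (hv : G.dist x v + G.dist v w ≤ G.dist x w + 1) : v ∈ BHull G x y := by
  induction n : G.dist w v generalizing w with
  | zero => rwa [← h.eq_of_dist_eq_zero n]
  | succ n ih =>
    obtain ⟨w', hw', hwv⟩ := exists_dist_eq_one_of_dist_eq_add_one h.connected n
    exact ih (h.mem_BHull_of_adj hxy hw hw' (by grind)) (by grind) (by grind)

end IsBRigid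

theorem IsHullTransportable.mem_BHull_of_weakGeodetic [Finite V] {k : ℕ}
    (hT : IsHullTransportable G k) (h : IsBRigid G) (hk : k ≤ 3) (hxy : G.dist x y = k)
    (hu : u ∈ BHull G x y) (hw : w ∈ BHull G x y)
    (hv : G.dist u v + G.dist v w ≤ G.dist u w + 1) : v ∈ BHull G x y := by
  obtain ⟨y', hy', e⟩ := hT.exists_BHull_eq h hk hxy hu
  rw [e] at hw ⊢
  exact h.mem_BHull_of_weakGeodetic_base (by omega) hw hv

/-! ### Hulls of diameter two -/

namespace IsBRigid

theorem dist_le_two_of_Bset_subset [Finite V] (h : IsBRigid G) (hs : G.dist x s = 2)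
    (hy : G.dist x y = 2) (hsub : Bset G x s ⊆ Bset G x y) : G.dist s y ≤ 2 := by
  obtain ⟨r, hxr, hrs⟩ := exists_dist_eq_one_of_dist_eq_add_one h.connected hs
  obtain ⟨q, hxq, hqy⟩ := exists_dist_eq_one_of_dist_eq_add_one h.connected hy
  have hsq := dist_le_of_Bset_subset h.connected hsub hxq (by grind)
  have hyr := dist_le_of_Bset_subset h.connected (h.Bset_eq_of_subset hsub (by omega)).ge hxr
    (by grind)
  by_contra hcon
  have hrq : G.dist r q = 2 := by
    have := h.no_triangle (x := r) (y := x) (z := q)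
    have := h.eq_of_dist_eq_zero (x := r) (y := q)
    grind
  have := h.no_parallelogram (i := 2) (by simp) (by simp) (x := s) (y := r) (z := q) (u := y)
  grind

theorem Bset_subset_of_Bset_subset_of_dist_eq_two [Finite V] (h : IsBRigid G)
    (hxy : G.dist x y = 2) (hxt : G.dist x t = 2) (hty : G.dist t y = 2)
    (hsub : Bset G t x ⊆ Bset G t y) : Bset G x y ⊆ Bset G x t := by
  refine fun g ⟨hg, hyg⟩ => ⟨hg, ?_⟩
  by_contra hc
  by_cases e : G.dist g t = 1
  · have : g ∈ Bset G t y → _ := fun hg => ((h.Bset_eq_of_subset hsub (by grind)).ge hg).2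
    grind [Bset]
  · have htg : Bset G t g ⊆ Bset G t x := h.Bset_subset_of_adj (by grind) (by grind) (by grind)
    have := h.dist_le_two_of_Bset_subset (by grind) (by grind) (htg.trans hsub)
    grind

theorem exists_adj_dist_eq_two (h : IsBRigid G) (hxv : G.dist x v = 1) (hxy : G.dist x y = 2)
    (hvy : G.dist v y + 1 = 2) :
    ∃ y', G.dist y y' = 1 ∧ G.dist x y' = 2 ∧ G.dist v y' = 2 := by
  obtain ⟨w, hw⟩ := h.nonempty_Aset (x := y) (y := x) (by grind)
  have := h.no_triangle (x := v) (y := y) (z := w)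
  exact ⟨w, by grind [Aset]⟩

theorem dist_le_two_of_mem_BHull [Finite V] (h : IsBRigid G) (hxy : G.dist x y = 2)
    (hs : s ∈ BHull G x y) : G.dist s y ≤ 2 := by
  obtain ⟨hs₁, hs₂⟩ := hs
  by_cases e : G.dist x s = 2
  · have := h.dist_le_two_of_Bset_subset hxy e hs₂
    grind
  by_cases e0 : G.dist x s = 0
  · grind
  · have := dist_le_of_Bset_subset h.connected hs₂ (v := s) (by grind) (by grind)
    grind

theorem Bset_subset_Bset_of_dist_eq_one [Finite V] (h : IsBRigid G) (hxv : G.dist x v = 1)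
    (hxy : G.dist x y = 2) (hvy : G.dist v y = 2) (hxs : G.dist x s = 1) (hvs : G.dist v s ≠ 0)
    (hsy : G.dist s y ≤ 2) : Bset G v y ⊆ Bset G v s := by
  have hvs2 : G.dist v s = 2 := by
    have := h.no_triangle (x := v) (y := x) (z := s)
    grind
  by_cases e1 : G.dist s y = 1
  · exact h.Bset_subset_of_adj (by grind) (by grind) (by grind)
  have e2 : G.dist s y = 2 := by grind
  have k1 : Bset G y v ⊆ Bset G y x := h.Bset_subset_of_adj (by grind) (by grind) (by grind)
  have k2 : Bset G y x ⊆ Bset G y s := h.Bset_subset_of_adj (by grind) (by grind) (by grind)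
  exact (h.Bset_eq_of_subset (h.Bset_subset_of_Bset_subset_of_dist_eq_two hvs2 hvy
    (by grind) (k1.trans k2)) (by omega)).ge

theorem Bset_subset_Bset_of_dist_eq_two [Finite V] (h : IsBRigid G) (hxv : G.dist x v = 1)
    (hxy : G.dist x y = 2) (hvy : G.dist v y = 2) (hxs : G.dist x s = 2) (hvs : G.dist v s ≤ 2)
    (hsy : G.dist s y ≤ 2) (hsub : Bset G x y ⊆ Bset G x s) : Bset G v y ⊆ Bset G v s := by
  by_cases e0 : G.dist s y = 0
  · rw [h.eq_of_dist_eq_zero e0]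
  by_cases e1 : G.dist s y = 1
  · by_cases G.dist v s = 2
    · exact h.Bset_subset_of_adj (by grind) (by grind) (by grind)
    · exact Bset_subset_of_dist_add_dist_eq h.connected (by grind)
  have e2 : G.dist s y = 2 := by grind
  by_cases e3 : G.dist v s = 1
  · exact h.Bset_subset_of_dist_eq_one e3 (by grind)
  have hvs2 : G.dist v s = 2 := by grind
  have k1 : Bset G s x ⊆ Bset G s y :=
    (h.Bset_eq_of_subset (h.Bset_subset_of_Bset_subset_of_dist_eq_two (by grind) (by grind)
      (by grind) (h.Bset_eq_of_subset hsub (by omega)).ge) (by grind)).ge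
  have k2 : Bset G s v ⊆ Bset G s x := h.Bset_subset_of_adj (by grind) (by grind) (by grind)
  exact h.Bset_subset_of_Bset_subset_of_dist_eq_two hvy hvs2 (by grind) (k2.trans k1)

theorem BHull_subset_of_dist_eq_two [Finite V] (h : IsBRigid G) (hxv : G.dist x v = 1)
    (hxy : G.dist x y = 2) (hvy : G.dist v y = 2) : BHull G x y ⊆ BHull G v y := by
  intro s hs
  have hsy := h.dist_le_two_of_mem_BHull hxy hs
  obtain ⟨hs₁, hs₂⟩ := hs
  have hvs : G.dist v s ≤ 2 := by
    by_cases e : G.dist x s = 2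
    · have := dist_le_of_Bset_subset h.connected (h.Bset_eq_of_subset hs₂ (by omega)).ge hxv
        (by grind)
      grind
    · grind
  refine ⟨by omega, ?_⟩
  by_cases e0 : G.dist x s = 0
  · obtain rfl := h.eq_of_dist_eq_zero e0
    exact h.Bset_subset_of_dist_eq_one (by grind) (by grind)
  by_cases e1 : G.dist v s = 0
  · obtain rfl := h.eq_of_dist_eq_zero e1
    exact Bset_subset_of_dist_add_dist_eq h.connected (by grind)
  by_cases e2 : G.dist x s = 1
  · exact h.Bset_subset_Bset_of_dist_eq_one hxv hxy hvy e2 e1 hsy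
  · exact h.Bset_subset_Bset_of_dist_eq_two hxv hxy hvy (by omega) hvs hsy hs₂

theorem isHullTransportable_two [Finite V] (h : IsBRigid G) : IsHullTransportable G 2 where
  BHull_subset := h.BHull_subset_of_dist_eq_two
  exists_adj := h.exists_adj_dist_eq_two

end IsBRigid

/-! ### Weighted counting -/

open scoped Finset

section WeightSum

/-- `Γ₁(x) ∩ Γⱼ(y)` as a finset; it is `C(x,y)`, `A(x,y)` or `B(x,y)` according to whether
`j - ∂(x,y)` is `-1`, `0` or `1`. -/
noncomputable def nbrs [Fintype V] (G : SimpleGraph V) (x y : V) (j : ℕ) : Finset V :=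
  {v | G.dist x v = 1 ∧ G.dist y v = j}

@[simp]
theorem mem_nbrs [Fintype V] {j : ℕ} :
    v ∈ nbrs G x y j ↔ G.dist x v = 1 ∧ G.dist y v = j := by
  simp [nbrs]

grind_pattern mem_nbrs => v ∈ nbrs G x y j

/-- The sum of `b^{-∂(w,v)}` over `v ∈ S`, rescaled by `b⁵` so as to be polynomial in `b`. It is
meant for sets `S` within distance five of `w`, since the exponent is a truncated subtraction. -/
noncomputable def weightSum (G : SimpleGraph V) (b : ℝ) (w : V) (S : Finset V) : ℝ :=
  ∑ v ∈ S, b ^ (5 - G.dist w v)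

variable {b : ℝ} {S : Finset V}

theorem weightSum_eq_of_forall {m : ℕ} (h : ∀ v ∈ S, G.dist w v = m) :
    weightSum G b w S = #S * b ^ (5 - m) := by
  rw [weightSum, Finset.sum_congr rfl fun v hv => by rw [h v hv]]
  simp

theorem weightSum_eq_of_forall_or {m n : ℕ} (hmn : m ≠ n)
    (h : ∀ v ∈ S, G.dist w v = m ∨ G.dist w v = n) :
    weightSum G b w S =
      #{v ∈ S | G.dist w v = m} * (b ^ (5 - m) - b ^ (5 - n)) + #S * b ^ (5 - n) := by
  have hterm : ∀ v ∈ S, b ^ (5 - G.dist w v) =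
      (if G.dist w v = m then b ^ (5 - m) - b ^ (5 - n) else 0) + b ^ (5 - n) := by
    intro v hv
    rcases h v hv with e | e <;> simp [e, hmn.symm]
  rw [weightSum, Finset.sum_congr rfl hterm, Finset.sum_add_distrib, ← Finset.sum_filter]
  simp [mul_sub]

theorem weightSum_eq_of_forall_or_or {m n k : ℕ} (hmn : m ≠ n) (hmk : m ≠ k) (hnk : n ≠ k)
    (h : ∀ v ∈ S, G.dist w v = m ∨ G.dist w v = n ∨ G.dist w v = k) :
    weightSum G b w S =
      #{v ∈ S | G.dist w v = m} * (b ^ (5 - m) - b ^ (5 - k)) +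
      #{v ∈ S | G.dist w v = n} * (b ^ (5 - n) - b ^ (5 - k)) + #S * b ^ (5 - k) := by
  have hterm : ∀ v ∈ S, b ^ (5 - G.dist w v) =
      (if G.dist w v = m then b ^ (5 - m) - b ^ (5 - k) else 0) +
      (if G.dist w v = n then b ^ (5 - n) - b ^ (5 - k) else 0) + b ^ (5 - k) := by
    intro v hv
    rcases h v hv with e | e | e <;> simp [e, hmn, hmn.symm, hmk.symm, hnk.symm]
  rw [weightSum, Finset.sum_congr rfl hterm, Finset.sum_add_distrib, Finset.sum_add_distrib,
    ← Finset.sum_filter, ← Finset.sum_filter]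
  simp [mul_sub]

/-- As `b < 0`, the weights of the distances `k - 1` and `k + 1` deviate from that of `k` in the
same direction, so they cannot compensate each other. -/
theorem dist_eq_of_weightSum_eq {k : ℕ} (hb : b < 0) (hk : 1 ≤ k) (hk4 : k ≤ 4)
    (h : ∀ v ∈ S, G.dist w v + 1 = k ∨ G.dist w v = k ∨ G.dist w v = k + 1)
    (hS : weightSum G b w S = #S * b ^ (5 - k)) (hv : v ∈ S) : G.dist w v = k := by
  have hsum := weightSum_eq_of_forall_or_or (b := b) (m := k - 1) (n := k + 1) (by omega)
    (by omega) (by omega) (fun v hv => show _ ∨ _ ∨ G.dist w v = k by have := h v hv; omega)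
  rw [hS, show 5 - (k - 1) = 4 - k + 2 by omega, show 5 - k = 4 - k + 1 by omega,
    show 5 - (k + 1) = 4 - k by omega] at hsum
  set i := #{v ∈ S | G.dist w v = k - 1} with hi
  set j := #{v ∈ S | G.dist w v = k + 1} with hj
  have hij : (i : ℝ) * -b + j = 0 := by
    apply mul_left_cancel₀ (pow_ne_zero (4 - k) hb.ne)
    apply mul_left_cancel₀ (sub_ne_zero.2 (show b ≠ 1 by linarith))
    linear_combination hsum
  have hi0 : (0 : ℝ) ≤ i * -b := mul_nonneg i.cast_nonneg (by linarith)
  have : (0 : ℝ) ≤ j := j.cast_nonneg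
  have hi' : i = 0 := by
    have : (i : ℝ) * -b = 0 := by linarith
    exact_mod_cast (mul_eq_zero.1 this).resolve_right (by linarith)
  have hj' : j = 0 := by exact_mod_cast (by linarith : (j : ℝ) = 0)
  rw [hi, Finset.card_filter_eq_zero_iff] at hi'
  rw [hj, Finset.card_filter_eq_zero_iff] at hj'
  grind

end WeightSum

/-- A graph as in `IsBRigid`, with `c₂ = c`, `a₂ = a`, and `a`, `c₃`, `a₃` the given functions of
`b` and `c`, in which the weights `b^{-∂(w,·)}` satisfy Terwilliger's balanced set relations: the
weights of `Γ₁(x) ∩ Γⱼ(y)` and `Γ₁(y) ∩ Γⱼ(x)` differ by a multiple of the difference of the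
weights of `x` and `y`. -/
structure IsBalanced [Fintype V] (G : SimpleGraph V) (b : ℝ) (c a c₃ a₃ : ℕ) : Prop
    extends IsBRigid G where
  b_le : b ≤ -2
  one_le_c : 1 ≤ c
  a_pos : 0 < a
  a_eq : (a : ℝ) = (1 + b) * (1 + b - c)
  a₃_eq : (a₃ : ℝ) = (1 + b + b ^ 2) * a
  c₃_eq : (c₃ : ℝ) = (1 + b + b ^ 2) * (c - b)
  card_c₂ : ∀ {x y : V}, G.dist x y = 2 → #(nbrs G x y 1) = c
  card_a₂ : ∀ {x y : V}, G.dist x y = 2 → #(nbrs G x y 2) = a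
  card_c₃ : ∀ {x y : V}, G.dist x y = 3 → #(nbrs G x y 2) = c₃
  card_a₃ : ∀ {x y : V}, G.dist x y = 3 → #(nbrs G x y 3) = a₃
  balanced_a₂ : ∀ {x y : V} (w : V), G.dist x y = 2 → G.dist w x ≤ 4 → G.dist w y ≤ 4 →
    weightSum G b w (nbrs G x y 2) - weightSum G b w (nbrs G y x 2) =
      (1 + b - c) * (b ^ (5 - G.dist w x) - b ^ (5 - G.dist w y))
  balanced_c₃ : ∀ {x y : V} (w : V), G.dist x y = 3 → G.dist w x ≤ 4 → G.dist w y ≤ 4 →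
    weightSum G b w (nbrs G x y 2) - weightSum G b w (nbrs G y x 2) =
      (c - b) * b * (b ^ (5 - G.dist w x) - b ^ (5 - G.dist w y))
  balanced_a₃ : ∀ {x y : V} (w : V), G.dist x y = 3 → G.dist w x ≤ 4 → G.dist w y ≤ 4 →
    weightSum G b w (nbrs G x y 3) - weightSum G b w (nbrs G y x 3) =
      a * (b + 1) * (b ^ (5 - G.dist w x) - b ^ (5 - G.dist w y))

grind_pattern IsBalanced.toIsBRigid => IsBalanced G b c a c₃ a₃

namespace IsBalanced
variable [Fintype V] {b : ℝ} {c a c₃ a₃ : ℕ}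

/-! ### Distances in hulls of diameter three -/

theorem b_ne_zero (h : IsBalanced G b c a c₃ a₃) : b ≠ 0 := by linarith [h.b_le]

theorem b_mul_sub_one_ne_zero (h : IsBalanced G b c a c₃ a₃) : b * (b - 1) ≠ 0 := by
  nlinarith [h.b_le]

theorem one_lt_bracket_three (h : IsBalanced G b c a c₃ a₃) : 1 < 1 + b + b ^ 2 := by
  nlinarith [h.b_le]

theorem sub_neg (h : IsBalanced G b c a c₃ a₃) : 1 + b - (c : ℝ) < 0 := by
  linarith [h.b_le, c.cast_nonneg (α := ℝ)]

theorem sub_pos (h : IsBalanced G b c a c₃ a₃) : 0 < (c : ℝ) - b := by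
  linarith [h.b_le, c.cast_nonneg (α := ℝ)]

theorem dist_of_mem_nbrs_of_geodesic (h : IsBalanced G b c a c₃ a₃) (hwu : G.dist w u = 2)
    (hwz : G.dist w z = 4) (huz : G.dist u z = 2) :
    (∀ v ∈ nbrs G u z 2, G.dist w v = 3) ∧ ∀ v ∈ nbrs G z u 2, G.dist w v = 4 := by
  have hbal := h.balanced_a₂ w huz (by omega) (by omega)
  rw [weightSum_eq_of_forall_or (m := 2) (n := 3) (by simp) (by grind),
    weightSum_eq_of_forall_or (m := 3) (n := 4) (by simp) (by grind), h.card_a₂ huz,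
    h.card_a₂ (by grind), hwu, hwz] at hbal
  set i := #{v ∈ nbrs G u z 2 | G.dist w v = 2} with hi
  set j := #{v ∈ nbrs G z u 2 | G.dist w v = 3} with hj
  simp only [Nat.reduceSub] at hbal
  have hij : (i : ℝ) * b - j = 0 := by
    apply mul_left_cancel₀ h.b_mul_sub_one_ne_zero
    linear_combination hbal - (b * (b - 1)) * h.a_eq
  have hb := h.b_le
  have : (0 : ℝ) ≤ i := i.cast_nonneg
  have : (0 : ℝ) ≤ j := j.cast_nonneg
  have hi' : i = 0 := by exact_mod_cast (by nlinarith : (i : ℝ) = 0)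
  have hj' : j = 0 := by exact_mod_cast (by nlinarith : (j : ℝ) = 0)
  rw [hi, Finset.card_filter_eq_zero_iff] at hi'
  rw [hj, Finset.card_filter_eq_zero_iff] at hj'
  constructor <;> grind

theorem dist_le_three_of_dist_eq_two (h : IsBalanced G b c a c₃ a₃) (hty : G.dist t y = 3)
    (htz : G.dist t z = 2) (hsub : Bset G t y ⊆ Bset G t z) : G.dist z y ≤ 3 := by
  have hle : ∀ q ∈ nbrs G t z 1, G.dist y q ≤ 3 := fun q hq => by
    have := dist_le_of_Bset_subset h.connected hsub (v := q) (by grind) (by grind)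
    grind
  obtain ⟨q, htq, hqz⟩ := exists_dist_eq_one_of_dist_eq_add_one h.connected htz
  have hyq := hle q (by grind)
  by_contra hcon
  have hyz : G.dist y z = 4 := by grind
  have hthree : ∀ v ∈ nbrs G t z 2, G.dist y v = 3 := by
    intro v hv
    have hyv := dist_le_of_Bset_subset h.connected hsub (v := v) (by grind) (by grind)
    by_contra hv3
    have := (h.dist_of_mem_nbrs_of_geodesic (w := y) (u := v) (z := z) (by grind) hyz
      (by grind)).2 q
    have := h.no_triangle (x := q) (y := t) (z := v)
    have := h.eq_of_dist_eq_zero (x := q) (y := v)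
    grind
  have hbal := h.balanced_a₂ y htz (by grind) (by grind)
  have hrange : ∀ v ∈ nbrs G z t 2, G.dist y v = 3 ∨ G.dist y v = 4 := by
    intro v hv
    obtain ⟨q, htq, hqv⟩ := exists_dist_eq_one_of_dist_eq_add_one h.connected (mem_nbrs.1 hv).2
    have := dist_le_of_Bset_subset h.connected hsub htq (by grind)
    grind
  have hcard := Finset.card_filter_le (nbrs G z t 2) (fun v => G.dist y v = 3)
  rw [weightSum_eq_of_forall hthree, weightSum_eq_of_forall_or (by simp) hrange, h.card_a₂ htz,
    h.card_a₂ (by grind), SimpleGraph.dist_comm (u := y), hty, hyz] at hbal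
  rw [h.card_a₂ (by grind)] at hcard
  simp only [Nat.reduceSub] at hbal
  have key : (a : ℝ) - #{v ∈ nbrs G z t 2 | G.dist y v = 3} = 1 + b - c := by
    apply mul_left_cancel₀ h.b_mul_sub_one_ne_zero
    linear_combination hbal
  have : (#{v ∈ nbrs G z t 2 | G.dist y v = 3} : ℝ) ≤ a := by exact_mod_cast hcard
  linarith [h.sub_neg]

theorem dist_le_four_of_Bset_subset (h : IsBalanced G b c a c₃ a₃) (hxs : G.dist x s = 3)
    (hxy : G.dist x y = 3) (hsub : Bset G x s ⊆ Bset G x y) : G.dist s y ≤ 4 := by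
  obtain ⟨u, hyu, hux⟩ := exists_dist_eq_one_of_dist_eq_add_one h.connected
    (SimpleGraph.dist_comm.trans hxy)
  have := h.dist_le_three_of_dist_eq_two hxs (z := u) (by grind)
    (hsub.trans (Bset_subset_of_dist_add_dist_eq h.connected (by grind)))
  grind

theorem card_filter_nbrs_of_dist_eq_four (h : IsBalanced G b c a c₃ a₃) (hxs : G.dist x s = 3)
    (hxy : G.dist x y = 3) (hsub : Bset G x s ⊆ Bset G x y) (hsy : G.dist s y = 4) :
    (#{v ∈ nbrs G x y 2 | G.dist s v = 2} : ℝ) = c - b := by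
  have hthree : ∀ u ∈ nbrs G y x 2, G.dist s u = 3 := by
    intro u hu
    have := h.dist_le_three_of_dist_eq_two hxs (z := u) (by grind)
      (hsub.trans (Bset_subset_of_dist_add_dist_eq h.connected (by grind)))
    grind
  have hrange : ∀ v ∈ nbrs G x y 2, G.dist s v = 2 ∨ G.dist s v = 3 := by
    intro v hv
    have := dist_le_of_Bset_subset h.connected hsub (v := v) (by grind) (by grind)
    grind
  have hbal := h.balanced_c₃ s hxy (by grind) (by grind)
  rw [weightSum_eq_of_forall hthree, weightSum_eq_of_forall_or (by simp) hrange, h.card_c₃ hxy,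
    h.card_c₃ (by grind), hsy, SimpleGraph.dist_comm (u := s), hxs] at hbal
  simp only [Nat.reduceSub] at hbal
  apply mul_left_cancel₀ h.b_mul_sub_one_ne_zero
  apply mul_left_cancel₀ h.b_ne_zero
  linear_combination hbal

theorem card_filter_nbrs_add_card_filter_nbrs (h : IsBalanced G b c a c₃ a₃)
    (hxs : G.dist x s = 3) (hxy : G.dist x y = 3) (hsub : Bset G x s ⊆ Bset G x y)
    (hsy : G.dist s y = 4) :
    #{v ∈ nbrs G x y 2 | G.dist s v = 2} + #{v ∈ nbrs G x y 3 | G.dist s v = 2} = c₃ := by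
  classical
  have hge := (h.Bset_eq_of_subset hsub (by omega)).ge
  rw [← h.card_c₃ hxs, ← Finset.card_union_of_disjoint (Finset.disjoint_left.2 (by grind))]
  congr 1
  ext v
  have := dist_le_of_Bset_subset h.connected hge (v := v)
  grind

theorem dist_le_three_of_Bset_subset (h : IsBalanced G b c a c₃ a₃) (hxs : G.dist x s = 3)
    (hxy : G.dist x y = 3) (hsub : Bset G x s ⊆ Bset G x y) : G.dist s y ≤ 3 := by
  have hle := h.dist_le_four_of_Bset_subset hxs hxy hsub
  by_contra hcon
  have hsy : G.dist s y = 4 := by omega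
  have hrange : ∀ v ∈ nbrs G x y 3, G.dist s v = 2 ∨ G.dist s v = 3 := by
    intro v hv
    have := dist_le_of_Bset_subset h.connected hsub (v := v) (by grind) (by grind)
    grind
  have hrange' : ∀ v ∈ nbrs G y x 3, G.dist s v = 3 ∨ G.dist s v = 4 := by
    intro v hv
    have := h.dist_le_four_of_Bset_subset hxs (mem_nbrs.1 hv).2
      (hsub.trans (h.Bset_subset_of_adj (mem_nbrs.1 hv).1 (by grind) (by grind)))
    grind
  have hbal := h.balanced_a₃ s hxy (by grind) (by grind)
  rw [weightSum_eq_of_forall_or (by simp) hrange, weightSum_eq_of_forall_or (by simp) hrange',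
    h.card_a₃ hxy, h.card_a₃ (by grind), hsy, SimpleGraph.dist_comm (u := s), hxs] at hbal
  simp only [Nat.reduceSub] at hbal
  have hi := h.card_filter_nbrs_of_dist_eq_four hxs hxy hsub hsy
  have hk : (#{v ∈ nbrs G x y 2 | G.dist s v = 2} : ℝ) +
      #{v ∈ nbrs G x y 3 | G.dist s v = 2} = c₃ := by
    exact_mod_cast h.card_filter_nbrs_add_card_filter_nbrs hxs hxy hsub hsy
  have key : (#{v ∈ nbrs G y x 3 | G.dist s v = 3} : ℝ) = b ^ 2 * (1 + b) := by
    apply mul_left_cancel₀ h.b_mul_sub_one_ne_zero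
    linear_combination -hbal +
      (b * (b - 1)) * (h.a₃_eq + b * hk - b * hi + b * h.c₃_eq + b ^ 2 * h.a_eq)
  have : (0 : ℝ) ≤ #{v ∈ nbrs G y x 3 | G.dist s v = 3} := Nat.cast_nonneg _
  nlinarith [sq_nonneg b, h.b_le]

theorem dist_le_three_of_mem_BHull (h : IsBalanced G b c a c₃ a₃) (hty : G.dist t y = 3)
    (hz : z ∈ BHull G t y) : G.dist z y ≤ 3 := by
  obtain ⟨hle, hsub⟩ := hz
  by_cases e3 : G.dist t z = 3
  · have := h.dist_le_three_of_Bset_subset hty e3 hsub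
    grind
  by_cases e2 : G.dist t z = 2
  · exact h.dist_le_three_of_dist_eq_two hty e2 hsub
  by_cases e1 : G.dist t z = 1
  · have := dist_le_of_Bset_subset h.connected hsub e1 (by grind)
    grind
  have := h.eq_of_dist_eq_zero (x := t) (y := z)
  grind

/-! ### Moving the base point of a hull of diameter three -/

theorem Bset_subset_of_Bset_subset_of_dist_eq_three (h : IsBalanced G b c a c₃ a₃)
    (hxy : G.dist x y = 3) (hxt : G.dist x t = 3) (hty : G.dist t y = 3)
    (hsub : Bset G t x ⊆ Bset G t y) : Bset G x y ⊆ Bset G x t := by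
  refine fun g ⟨hxg, hyg⟩ => ⟨hxg, ?_⟩
  by_contra hc
  have hge := (h.Bset_eq_of_subset hsub (by grind)).ge
  have hg : g ∈ BHull G t x :=
    h.mem_BHull_of_adj (by grind) right_mem_BHull hxg (by grind)
  have := h.dist_le_three_of_mem_BHull hty (z := g) ⟨by grind, hge.trans hg.2⟩
  grind

theorem card_filter_nbrs_bounds_of_dist_eq_two (h : IsBalanced G b c a c₃ a₃)
    (hxs : G.dist x s = 3) (hxy : G.dist x y = 3) (hsub : Bset G x s ⊆ Bset G x y)
    (hsy : G.dist s y = 2) :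
    c + b ^ 2 ≤ (#{v ∈ nbrs G x s 2 | G.dist y v = 2} : ℝ) ∧
      (#{v ∈ nbrs G x s 2 | G.dist y v = 2} : ℝ) ≤ a - (c - b) * b := by
  have hge := (h.Bset_eq_of_subset hsub (by omega)).ge
  have hrange : ∀ v ∈ nbrs G x s 2, G.dist y v = 2 ∨ G.dist y v = 3 := by
    intro v hv
    have := dist_le_of_Bset_subset h.connected hge (v := v) (by grind) (by grind)
    grind
  have hbal := h.balanced_c₃ y hxs (by grind) (by grind)
  rw [weightSum_eq_of_forall_or (by simp) hrange,
    weightSum_eq_of_forall_or_or (m := 1) (n := 2) (k := 3) (by simp) (by simp) (by simp)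
      (by grind), h.card_c₃ hxs, h.card_c₃ (by grind), SimpleGraph.dist_comm (v := s), hsy,
    SimpleGraph.dist_comm (u := y), hxy] at hbal
  simp only [Nat.reduceSub] at hbal
  have hcard₁ : (#{v ∈ nbrs G s x 2 | G.dist y v = 1} : ℝ) ≤ c := by
    rw [← h.card_c₂ hsy]
    exact Nat.cast_le.2 (Finset.card_le_card (by grind))
  have hcard₂ : (#{v ∈ nbrs G s x 2 | G.dist y v = 2} : ℝ) ≤ a := by
    rw [← h.card_a₂ hsy]
    exact Nat.cast_le.2 (Finset.card_le_card (by grind))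
  set i := #{v ∈ nbrs G x s 2 | G.dist y v = 2}
  set i₁ := #{v ∈ nbrs G s x 2 | G.dist y v = 1}
  set i₂ := #{v ∈ nbrs G s x 2 | G.dist y v = 2}
  have key : (i : ℝ) = i₁ * (b + 1) + i₂ - (c - b) * b := by
    apply mul_left_cancel₀ h.b_mul_sub_one_ne_zero
    apply mul_left_cancel₀ h.b_ne_zero
    linear_combination hbal
  have : (0 : ℝ) ≤ i₁ := i₁.cast_nonneg
  have : (0 : ℝ) ≤ i₂ := i₂.cast_nonneg
  constructor <;> nlinarith [h.b_le]

theorem dist_ne_three_of_dist_eq_four (h : IsBalanced G b c a c₃ a₃) (hxs : G.dist x s = 3)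
    (hsp : G.dist s t = 1) (hxt : G.dist x t = 4) (hxv : G.dist x v = 1) (hvs : G.dist s v = 3) :
    G.dist t v ≠ 3 := by
  have := h.no_parallelogram (i := 3) (by simp) (by simp) (x := x) (y := v) (z := s) (u := t)
  grind

theorem Bset_subset_of_Bset_subset_of_dist_three_three_two (h : IsBalanced G b c a c₃ a₃)
    (hxs : G.dist x s = 3) (hxy : G.dist x y = 3) (hsub : Bset G x s ⊆ Bset G x y)
    (hsy : G.dist s y = 2) : Bset G s x ⊆ Bset G s y := by
  refine fun p ⟨hsp, hxp⟩ => ⟨hsp, ?_⟩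
  by_contra hcon
  have hrange : ∀ q ∈ nbrs G x y 2, G.dist s q = 2 ∨ G.dist s q = 3 := by
    intro q hq
    have := dist_le_of_Bset_subset h.connected hsub (v := q) (by grind) (by grind)
    grind
  have hpar : ∀ q, G.dist x q = 1 → G.dist s q = 3 → G.dist p q ≠ 3 := fun q =>
    h.dist_ne_three_of_dist_eq_four hxs hsp (by grind)
  obtain ⟨hlow, hupp⟩ := h.card_filter_nbrs_bounds_of_dist_eq_two hxs hxy hsub hsy
  have hb := h.b_le
  have hc : (1 : ℝ) ≤ c := by exact_mod_cast h.one_le_c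
  by_cases hpy : G.dist p y = 1
  · have hcard : #{q ∈ nbrs G x s 2 | G.dist y q = 2} = c₃ := by
      rw [← h.card_c₃ hxy]
      congr 1
      grind
    rw [hcard, h.c₃_eq, h.a_eq] at hupp
    have hcube : 0 < (-(1 + b)) ^ 3 := pow_pos (by linarith) 3
    have : 0 ≤ -(1 + b) * -(2 + b) * c :=
      mul_nonneg (mul_nonneg (by linarith) (by linarith)) (by linarith)
    linarith
  · have hpy2 : G.dist p y = 2 := by
      have := h.eq_of_dist_eq_zero (x := p) (y := y)
      grind
    have hbal := h.balanced_c₃ p hxy (by grind) (by grind)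
    have hcard : #{q ∈ nbrs G x y 2 | G.dist p q = 3} = #{q ∈ nbrs G x s 2 | G.dist y q = 2} := by
      congr 1
      grind
    rw [weightSum_eq_of_forall_or (m := 3) (n := 4) (by simp) (by grind),
      weightSum_eq_of_forall_or (m := 2) (n := 3) (by simp) (by grind), hcard, h.card_c₃ hxy,
      h.card_c₃ (by grind), hpy2, show G.dist p x = 4 by grind] at hbal
    simp only [Nat.reduceSub] at hbal
    have key : (#{q ∈ nbrs G x s 2 | G.dist y q = 2} : ℝ) -
        #{v ∈ nbrs G y x 2 | G.dist p v = 2} * b = c - b := by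
      apply mul_left_cancel₀ h.b_mul_sub_one_ne_zero
      linear_combination hbal + b * (b - 1) * h.c₃_eq
    have : (0 : ℝ) ≤ #{v ∈ nbrs G y x 2 | G.dist p v = 2} := Nat.cast_nonneg _
    nlinarith

theorem Bset_subset_of_forall_dist_eq (h : IsBalanced G b c a c₃ a₃) {k : ℕ} (hk : 2 ≤ k)
    (hk3 : k ≤ 3) (hsy : G.dist s y = 2) (hvs : G.dist v s = k) (hvy : G.dist v y = k)
    (hyp : ∀ p ∈ nbrs G y s 2, G.dist v p = k) : Bset G v y ⊆ Bset G v s := by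
  obtain ⟨q, hq⟩ := h.nonempty_Aset hsy
  have hvq : G.dist v q = k := by
    have hbal := h.balanced_a₂ v hsy (by omega) (by omega)
    rw [weightSum_eq_of_forall hyp, h.card_a₂ (by grind), hvs, hvy, sub_self, mul_zero,
      sub_eq_zero] at hbal
    refine dist_eq_of_weightSum_eq (b := b) (S := nbrs G s y 2) (by linarith [h.b_le])
      (by omega) (by omega) (by grind) (by rw [hbal, h.card_a₂ hsy]) (by grind [Aset])
  obtain ⟨p, hqp, hpy⟩ := exists_dist_eq_one_of_dist_eq_add_one (x := q) (y := y) (n := 1)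
    h.connected (by grind [Aset])
  have hvp := hyp p (by
    have := h.no_triangle (x := s) (y := q) (z := p)
    grind [Aset])
  have hyp' := h.Bset_subset_of_adj (x := v) (z := y) (w := p) (by grind) (by grind) (by grind)
  have hpq := h.Bset_subset_of_adj (x := v) (z := p) (w := q) (by grind) (by grind) (by grind)
  have hqs := h.Bset_subset_of_adj (x := v) (z := q) (w := s) (by grind [Aset]) (by grind)
    (by grind)
  exact hyp'.trans (hpq.trans hqs)

theorem dist_eq_three_of_mem_nbrs (h : IsBalanced G b c a c₃ a₃) (hxv : G.dist x v = 1)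
    (hxs : G.dist x s = 3) (hxy : G.dist x y = 3) (hsub : Bset G x s ⊆ Bset G x y)
    (hsy : G.dist s y = 2) (hvy : G.dist v y = 3) (hvw : G.dist v w = 1) (hyw : G.dist y w = 4)
    (hsw : G.dist s w = 2) {p : V} (hp : p ∈ nbrs G y s 2) : G.dist v p = 3 := by
  have hwp := (h.dist_of_mem_nbrs_of_geodesic (w := w) (u := s) (z := y) (by grind) (by grind)
    hsy).2 p hp
  have hge := (h.Bset_eq_of_subset hsub (by omega)).ge
  have hxp : G.dist x p ≤ 3 := by
    by_contra hcon
    have hpB := h.Bset_subset_of_Bset_subset_of_dist_three_three_two hxy hxs hge (by grind)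
      (show p ∈ Bset G y x by grind [Bset])
    grind [Bset]
  have hpH := h.mem_BHull_of_adj (x := x) (by omega) right_mem_BHull (mem_nbrs.1 hp).1 (by omega)
  have : G.dist v p ≤ 3 := by
    by_cases hp3 : G.dist x p = 3
    · have := dist_le_of_Bset_subset h.connected (h.Bset_eq_of_subset hpH.2 (by omega)).ge hxv
        (by grind)
      grind
    · grind
  grind

theorem Bset_subset_Bset_of_dist_eq_three (h : IsBalanced G b c a c₃ a₃) (hxv : G.dist x v = 1)
    (hxs : G.dist x s = 3) (hxy : G.dist x y = 3) (hvs : G.dist v s = 3) (hvy : G.dist v y = 3)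
    (hsub : Bset G x s ⊆ Bset G x y) : Bset G v s ⊆ Bset G v y := by
  have hsy := h.dist_le_three_of_Bset_subset hxs hxy hsub
  have hsvx : Bset G s v ⊆ Bset G s x :=
    h.Bset_subset_of_adj (by grind) (by grind) (by grind)
  by_cases e0 : G.dist s y = 0
  · rw [h.eq_of_dist_eq_zero e0]
  by_cases e1 : G.dist s y = 1
  · exact h.Bset_subset_of_adj e1 (by omega) (by omega)
  refine (h.Bset_eq_of_subset ?_ (by omega)).ge
  by_cases e3 : G.dist s y = 3
  · have hsyx : Bset G s y ⊆ Bset G s x :=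
      h.Bset_subset_of_Bset_subset_of_dist_eq_three e3 (by grind) (by grind) hsub
    have hsyv := hsyx.trans (h.Bset_eq_of_subset hsvx (by grind)).ge
    exact h.Bset_subset_of_Bset_subset_of_dist_eq_three hvy hvs (by grind)
      (h.Bset_eq_of_subset hsyv (by grind)).ge
  have e2 : G.dist s y = 2 := by omega
  have hsvy := hsvx.trans (h.Bset_subset_of_Bset_subset_of_dist_three_three_two hxs hxy hsub e2)
  by_contra hcon
  obtain ⟨w, ⟨hvw, hyw⟩, hsw⟩ := Set.not_subset.1 hcon
  have hws : G.dist s w ≠ 3 := by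
    intro hws
    have hsw : Bset G s w ⊆ Bset G s v := h.Bset_subset_of_adj (by grind) (by grind) (by grind)
    have := h.dist_le_three_of_dist_eq_two (t := s) (y := w) (z := y) (by grind) e2
      (hsw.trans hsvy)
    grind
  refine hcon (h.Bset_subset_of_forall_dist_eq (by simp) le_rfl e2 hvs hvy fun p hp =>
    h.dist_eq_three_of_mem_nbrs hxv hxs hxy hsub e2 hvy hvw (by grind) ?_ hp)
  grind [Bset]

theorem exists_adj_dist_eq_three (h : IsBalanced G b c a c₃ a₃) (hxv : G.dist x v = 1)
    (hxy : G.dist x y = 3) (hvy : G.dist v y + 1 = 3) :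
    ∃ y', G.dist y y' = 1 ∧ G.dist x y' = 3 ∧ G.dist v y' = 3 := by
  by_contra! hcon
  have hcard := Finset.card_le_card (s := nbrs G y x 3) (t := nbrs G y v 2) (by grind)
  rw [h.card_a₃ (by grind), h.card_a₂ (by grind)] at hcard
  have : (a₃ : ℝ) ≤ a := by exact_mod_cast hcard
  have : (0 : ℝ) < a := by exact_mod_cast h.a_pos
  linarith [lt_mul_of_one_lt_left this h.one_lt_bracket_three, h.a₃_eq]

theorem mem_BHull_of_dist_eq_three (h : IsBalanced G b c a c₃ a₃) (hxv : G.dist x v = 1)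
    (hxy : G.dist x y = 3) (hvy : G.dist v y = 3) (hxs : G.dist x s = 3)
    (hsub : Bset G x y ⊆ Bset G x s) : s ∈ BHull G v y := by
  have := dist_le_of_Bset_subset h.connected (h.Bset_eq_of_subset hsub (by omega)).ge hxv
    (by grind)
  by_cases e3 : G.dist v s = 3
  · exact ⟨by omega, h.Bset_subset_Bset_of_dist_eq_three hxv hxy hxs hvy e3 hsub⟩
  · obtain ⟨y', hsy', hxy', hvy'⟩ := h.exists_adj_dist_eq_three hxv hxs (by grind)
    have hxsy' := h.Bset_subset_of_adj (x := x) hsy' (by omega) (by omega)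
    exact ⟨by grind, (h.Bset_subset_Bset_of_dist_eq_three hxv hxy hxy' hvy hvy'
      (hsub.trans hxsy')).trans (Bset_subset_of_dist_add_dist_eq h.connected (by grind))⟩

theorem card_filter_nbrs_of_dist_three_three (h : IsBalanced G b c a c₃ a₃)
    (hxv : G.dist x v = 1) (hxy : G.dist x y = 3) (hvy : G.dist v y = 3) :
    (#{u ∈ nbrs G y x 2 | G.dist v u = 2} : ℝ) = c - b := by
  have htwo : ∀ q ∈ nbrs G x y 2, G.dist v q = 2 := by
    intro q hq
    have := h.no_triangle (x := v) (y := x) (z := q)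
    have := h.eq_of_dist_eq_zero (x := v) (y := q)
    grind
  have hbal := h.balanced_c₃ v hxy (by grind) (by omega)
  rw [weightSum_eq_of_forall_or (S := nbrs G y x 2) (m := 2) (n := 3) (by simp) (by grind),
    weightSum_eq_of_forall htwo, h.card_c₃ hxy, h.card_c₃ (by grind), hvy,
    show G.dist v x = 1 by grind] at hbal
  simp only [Nat.reduceSub] at hbal
  apply mul_left_cancel₀ h.b_mul_sub_one_ne_zero
  apply mul_left_cancel₀ h.b_ne_zero
  linear_combination -hbal + b * (b * (b - 1)) * h.c₃_eq

theorem dist_eq_three_of_mem_nbrs_of_mem_Bset (h : IsBalanced G b c a c₃ a₃)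
    (hxv : G.dist x v = 1) (hxy : G.dist x y = 3) (hvy : G.dist v y = 3) (hvw : G.dist v w = 1)
    (hyw : G.dist y w = 4) {q : V} (hq : q ∈ nbrs G x y 2) : G.dist w q = 3 := by
  have hxw : G.dist x w = 2 := by
    have := h.no_triangle (x := w) (y := v) (z := x)
    grind
  have hiff : ∀ u ∈ nbrs G y x 2, G.dist w u = 3 ↔ G.dist v u = 2 := by
    intro u hu
    have := h.no_parallelogram (i := 3) (by simp) (by simp) (x := w) (y := v) (z := u) (u := y)
    grind
  have hbal := h.balanced_c₃ w hxy (by grind) (by grind)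
  rw [weightSum_eq_of_forall_or (S := nbrs G y x 2) (m := 3) (n := 4) (by simp) (by grind),
    weightSum_eq_of_forall_or (m := 2) (n := 3) (by simp) (by grind), h.card_c₃ hxy,
    h.card_c₃ (by grind), Finset.filter_congr hiff,
    h.card_filter_nbrs_of_dist_three_three hxv hxy hvy, show G.dist w y = 4 by grind,
    show G.dist w x = 2 by grind] at hbal
  simp only [Nat.reduceSub] at hbal
  have hzero : (#{q ∈ nbrs G x y 2 | G.dist w q = 2} : ℝ) = 0 := by
    apply mul_left_cancel₀ h.b_mul_sub_one_ne_zero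
    apply mul_left_cancel₀ h.b_ne_zero
    linear_combination hbal - (b * (b - 1)) * h.c₃_eq
  rw [Nat.cast_eq_zero, Finset.card_filter_eq_zero_iff] at hzero
  grind

theorem exists_adj_dist_three_two (h : IsBalanced G b c a c₃ a₃) (hxs : G.dist x s = 1)
    (hxy : G.dist x y = 3) (hsy : G.dist s y = 3) :
    ∃ z, G.dist y z = 1 ∧ G.dist s z = 2 ∧ G.dist x z = 3 := by
  by_contra! hcon
  have hcard := Finset.card_le_card (s := nbrs G y s 2)
    (t := {u ∈ nbrs G y x 2 | G.dist s u = 2}) (by grind)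
  have hle : (c₃ : ℝ) ≤ c - b := by
    rw [← h.card_filter_nbrs_of_dist_three_three hxs hxy hsy, ← h.card_c₃ (x := y) (y := s)
      (by grind)]
    exact_mod_cast hcard
  linarith [lt_mul_of_one_lt_left h.sub_pos h.one_lt_bracket_three, h.c₃_eq]

theorem exists_adj_dist_two_three_three (h : IsBalanced G b c a c₃ a₃) (hxs : G.dist x s = 1)
    (hxv : G.dist x v = 1) (hsv : s ≠ v) (hxz : G.dist x z = 3) (hsz : G.dist s z = 2)
    (hvz : G.dist v z = 2) :
    ∃ z', G.dist z z' = 1 ∧ G.dist s z' = 2 ∧ G.dist x z' = 3 ∧ G.dist v z' = 3 := by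
  have hvs : G.dist v s = 2 := by
    have := h.no_triangle (x := v) (y := x) (z := s)
    have := h.eq_of_dist_eq_zero (x := s) (y := v)
    grind
  by_contra! hcon
  have hxB := h.Bset_subset_of_forall_dist_eq (v := v) le_rfl (by simp) hsz hvs hvz (by
    intro u hu
    have := hcon u
    have := h.no_parallelogram (i := 2) (by simp) (by simp) (x := x) (y := s) (z := u) (u := z)
    grind)
  have := hxB (show x ∈ Bset G v z by grind [Bset])
  grind [Bset]

theorem exists_dist_three_three_two_Bset_subset (h : IsBalanced G b c a c₃ a₃)
    (hxs : G.dist x s = 1) (hxv : G.dist x v = 1) (hsv : s ≠ v) (hxy : G.dist x y = 3)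
    (hvy : G.dist v y = 3) (hsy : G.dist s y ≤ 3) :
    ∃ z, G.dist x z = 3 ∧ G.dist v z = 3 ∧ G.dist s z = 2 ∧ Bset G v y ⊆ Bset G v z := by
  obtain ⟨z₀, hxz₀, hsz₀, hz₀⟩ :
      ∃ z, G.dist x z = 3 ∧ G.dist s z = 2 ∧ Bset G x y ⊆ Bset G x z := by
    by_cases e : G.dist s y = 2
    · exact ⟨y, hxy, e, subset_rfl⟩
    · obtain ⟨z, hyz, hsz, hxz⟩ := h.exists_adj_dist_three_two hxs hxy (by grind)
      exact ⟨z, hxz, hsz, h.Bset_subset_of_adj hyz (by omega) (by omega)⟩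
  obtain ⟨z, hxz, hvz, hsz, hz⟩ :
      ∃ z, G.dist x z = 3 ∧ G.dist v z = 3 ∧ G.dist s z = 2 ∧ Bset G x y ⊆ Bset G x z := by
    have := dist_le_of_Bset_subset h.connected (h.Bset_eq_of_subset hz₀ (by omega)).ge hxv
      (by grind)
    by_cases e : G.dist v z₀ = 3
    · exact ⟨z₀, hxz₀, e, hsz₀, hz₀⟩
    · obtain ⟨z, hzz, hsz, hxz, hvz⟩ := h.exists_adj_dist_two_three_three hxs hxv hsv hxz₀ hsz₀
        (by grind)
      exact ⟨z, hxz, hvz, hsz, hz₀.trans (h.Bset_subset_of_adj hzz (by omega) (by omega))⟩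
  exact ⟨z, hxz, hvz, hsz, h.Bset_subset_Bset_of_dist_eq_three hxv hxy hxz hvy hvz hz⟩

theorem mem_BHull_of_dist_eq_one (h : IsBalanced G b c a c₃ a₃) (hxv : G.dist x v = 1)
    (hxy : G.dist x y = 3) (hvy : G.dist v y = 3) (hxs : G.dist x s = 1)
    (hsy : G.dist s y ≤ 3) : s ∈ BHull G v y := by
  refine ⟨by grind, ?_⟩
  by_cases e : s = v
  · exact e ▸ Bset_subset_of_dist_add_dist_eq h.connected (by grind)
  obtain ⟨z, hxz, hvz, hsz, hz⟩ :=
    h.exists_dist_three_three_two_Bset_subset hxs hxv e hxy hvy hsy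
  intro w hw
  have hzw := hz hw
  have := h.dist_eq_three_of_mem_nbrs_of_mem_Bset hxv hxz hvz (w := w) (q := s)
    (by grind [Bset]) (by grind [Bset]) (by grind)
  have := h.no_triangle (x := v) (y := x) (z := s)
  have := h.eq_of_dist_eq_zero (x := v) (y := s)
  grind [Bset]

theorem dist_le_three_of_dist_three_three (h : IsBalanced G b c a c₃ a₃) (hxy : G.dist x y = 3)
    (hxs : G.dist x s = 2) (hsub : Bset G x y ⊆ Bset G x s) (hxr : G.dist x r = 1)
    (hrs : G.dist r s = 1) {y' : V} (hxy' : G.dist x y' = 3) (hsub' : Bset G x y ⊆ Bset G x y')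
    (hry' : G.dist r y' = 3) : G.dist s y' ≤ 3 := by
  by_contra hcon
  obtain ⟨w, hw⟩ := h.nonempty_Aset hxs
  have hrw : G.dist r w = 2 := by
    have := h.no_triangle (x := w) (y := x) (z := r)
    have := h.eq_of_dist_eq_zero (x := w) (y := r)
    grind [Aset]
  have hyw : G.dist y w ≤ 3 :=
    (dist_le_of_Bset_subset h.connected hsub hw.1 (by grind [Aset])).trans hxy.le
  have hy'w := dist_le_of_Bset_subset h.connected (h.Bset_eq_of_subset hsub' (by omega)).ge hw.1
    (by omega)
  have := (h.mem_BHull_of_dist_eq_one hxr hxy' hry' hw.1 (by grind)).2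
    (show s ∈ Bset G r y' by grind [Bset])
  grind [Bset, Aset]

theorem exists_dist_three_two_Bset_subset (h : IsBalanced G b c a c₃ a₃) (hxy : G.dist x y = 3)
    (hxs : G.dist x s = 2) (hsub : Bset G x y ⊆ Bset G x s) :
    ∃ z, G.dist x z = 3 ∧ G.dist s z = 2 ∧ Bset G x y ⊆ Bset G x z := by
  obtain ⟨r, hxr, hrs⟩ := exists_dist_eq_one_of_dist_eq_add_one h.connected hxs
  have hyr := dist_le_of_Bset_subset h.connected hsub hxr (by grind)
  obtain ⟨y', hxy', hry', hy'⟩ :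
      ∃ y', G.dist x y' = 3 ∧ G.dist r y' = 3 ∧ Bset G x y ⊆ Bset G x y' := by
    by_cases e : G.dist r y = 3
    · exact ⟨y, hxy, e, subset_rfl⟩
    · obtain ⟨y', hyy', hxy', hry'⟩ := h.exists_adj_dist_eq_three hxr hxy (by grind)
      exact ⟨y', hxy', hry', h.Bset_subset_of_adj hyy' (by omega) (by omega)⟩
  have hsy' := h.dist_le_three_of_dist_three_three hxy hxs hsub hxr hrs hxy' hy' hry'
  obtain ⟨z, -, hxz, hsz, hz⟩ := h.exists_dist_three_three_two_Bset_subset (x := r) (v := x)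
    hrs (by grind) (by rintro rfl; grind) hry' hxy' hsy'
  exact ⟨z, hxz, hsz, hy'.trans hz⟩

theorem dist_eq_three_of_mem_nbrs_of_forall (h : IsBalanced G b c a c₃ a₃)
    (hxs : G.dist x s = 2) (hxz : G.dist x z = 3) (hsz : G.dist s z = 2)
    (hall : ∀ q, G.dist s q = 1 → G.dist q z = 1 → G.dist x q ≠ 3) (ht : t ∈ nbrs G s z 2) :
    G.dist x t = 3 := by
  obtain ⟨q, hsq, hqz⟩ := exists_dist_eq_one_of_dist_eq_add_one h.connected hsz
  have hxq : G.dist x q = 2 := by grind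
  have htq : G.dist t q = 2 := by
    have := h.no_triangle (x := t) (y := s) (z := q)
    have := h.eq_of_dist_eq_zero (x := t) (y := q)
    grind
  by_contra hcon
  by_cases e1 : G.dist x t = 1
  · have := h.no_parallelogram (i := 2) (by simp) (by simp) (x := x) (y := t) (z := q) (u := z)
    grind
  · have htH : t ∈ BHull G x s :=
      h.mem_BHull_of_adj (by omega) right_mem_BHull (mem_nbrs.1 ht).1 (by grind)
    have hqH : q ∈ BHull G x s :=
      h.mem_BHull_of_adj (by omega) right_mem_BHull hsq (by grind)
    have := (h.isHullTransportable_two.mem_BHull_of_weakGeodetic h.toIsBRigid (by simp) hxs htH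
      hqH (v := z) (by grind)).1
    omega

theorem dist_eq_two_or_three_of_mem_nbrs (h : IsBalanced G b c a c₃ a₃)
    (hxs : G.dist x s = 2) (hxz : G.dist x z = 3) (hsz : G.dist s z = 2) {p : V}
    (hp : p ∈ nbrs G z s 2) :
    G.dist x p = 2 ∨ G.dist x p = 3 := by
  have := fun hxp hsp => (h.dist_of_mem_nbrs_of_geodesic (w := x) (u := s) (z := p) hxs hxp hsp).2 z
  grind

theorem card_filter_nbrs_of_forall (h : IsBalanced G b c a c₃ a₃)
    (hxs : G.dist x s = 2) (hxz : G.dist x z = 3) (hsz : G.dist s z = 2)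
    (hthree : ∀ t ∈ nbrs G s z 2, G.dist x t = 3) :
    (#{p ∈ nbrs G z s 2 | G.dist x p = 2} : ℝ) = -(1 + b - c) := by
  have hbal := h.balanced_a₂ x hsz (by omega) (by omega)
  rw [weightSum_eq_of_forall hthree, weightSum_eq_of_forall_or (by simp)
    (fun p => h.dist_eq_two_or_three_of_mem_nbrs hxs hxz hsz), h.card_a₂ hsz,
    h.card_a₂ (by grind), hxs, hxz] at hbal
  simp only [Nat.reduceSub] at hbal
  apply mul_left_cancel₀ h.b_mul_sub_one_ne_zero
  apply mul_left_cancel₀ h.b_ne_zero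
  linear_combination -hbal

theorem dist_eq_three_or_four_of_mem_nbrs (h : IsBalanced G b c a c₃ a₃) (hxs : G.dist x s = 2)
    (hxz : G.dist x z = 3) (hsz : G.dist s z = 2)
    (hall : ∀ q, G.dist s q = 1 → G.dist q z = 1 → G.dist x q ≠ 3) (hxw : G.dist x w = 1)
    (hws : G.dist w s = 3) (hwz : G.dist w z = 4) (hu : u ∈ nbrs G s z 2) :
    G.dist w u = 3 ∨ G.dist w u = 4 := by
  obtain ⟨q, hsq, hqz⟩ := exists_dist_eq_one_of_dist_eq_add_one h.connected hsz
  have hxq : G.dist x q = 2 := by grind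
  have hwq : G.dist w q ≤ 3 := by grind
  have hxu := h.dist_eq_three_of_mem_nbrs_of_forall hxs hxz hsz hall hu
  have := fun hwu huz => (h.dist_of_mem_nbrs_of_geodesic (u := u) hwu hwz huz).2 q
  have := h.no_triangle (x := u) (y := s) (z := q)
  have := h.eq_of_dist_eq_zero (x := u) (y := q)
  grind

theorem Bset_subset_of_mem_nbrs_of_forall (h : IsBalanced G b c a c₃ a₃) (hxs : G.dist x s = 2)
    (hxz : G.dist x z = 3) (hsz : G.dist s z = 2) (hsub : Bset G x z ⊆ Bset G x s)
    (hall : ∀ q, G.dist s q = 1 → G.dist q z = 1 → G.dist x q ≠ 3) (ht : t ∈ nbrs G s z 2) :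
    Bset G x z ⊆ Bset G x t := by
  have hthree : ∀ t ∈ nbrs G s z 2, G.dist x t = 3 := fun t =>
    h.dist_eq_three_of_mem_nbrs_of_forall hxs hxz hsz hall
  intro w hw
  have hws : G.dist w s = 3 := by have := hsub hw; grind [Bset]
  have hwz : G.dist w z = 4 := by grind [Bset]
  have hxp : ∀ p ∈ nbrs G z s 2, G.dist x p = 2 ∨ G.dist x p = 3 := fun p =>
    h.dist_eq_two_or_three_of_mem_nbrs hxs hxz hsz
  have hwp : ∀ p ∈ nbrs G z s 2, G.dist w p = G.dist x p + 1 := by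
    intro p hp
    have : Bset G x z ⊆ Bset G x p := by
      rcases hxp p hp with e | e
      · exact Bset_subset_of_dist_add_dist_eq h.connected (by grind)
      · exact h.Bset_subset_of_adj (by grind) (by grind) (by grind)
    have := this hw
    grind [Bset]
  have hwu : ∀ u ∈ nbrs G s z 2, G.dist w u = 3 ∨ G.dist w u = 4 := fun u =>
    h.dist_eq_three_or_four_of_mem_nbrs hxs hxz hsz hall hw.1 hws hwz
  have hbal := h.balanced_a₂ w hsz (by omega) (by omega)
  have hfilter : ∀ p ∈ nbrs G z s 2, G.dist w p = 3 ↔ G.dist x p = 2 := by grind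
  rw [weightSum_eq_of_forall_or (m := 3) (n := 4) (by simp) hwu,
    weightSum_eq_of_forall_or (m := 3) (n := 4) (by simp) (by grind), h.card_a₂ hsz,
    h.card_a₂ (by grind), hws, hwz, Finset.filter_congr hfilter,
    h.card_filter_nbrs_of_forall hxs hxz hsz hthree] at hbal
  simp only [Nat.reduceSub] at hbal
  have hzero : (#{u ∈ nbrs G s z 2 | G.dist w u = 3} : ℝ) = 0 := by
    apply mul_left_cancel₀ h.b_mul_sub_one_ne_zero
    linear_combination hbal
  rw [Nat.cast_eq_zero, Finset.card_filter_eq_zero_iff] at hzero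
  have := hthree t ht
  grind [Bset]

theorem exists_dist_three_one_Bset_subset (h : IsBalanced G b c a c₃ a₃) (hxy : G.dist x y = 3)
    (hxs : G.dist x s = 2) (hsub : Bset G x y ⊆ Bset G x s) :
    ∃ z, G.dist x z = 3 ∧ G.dist s z = 1 ∧ Bset G x y ⊆ Bset G x z := by
  obtain ⟨z, hxz, hsz, hz⟩ := h.exists_dist_three_two_Bset_subset hxy hxs hsub
  by_cases hex : ∃ q, G.dist s q = 1 ∧ G.dist q z = 1 ∧ G.dist x q = 3
  · obtain ⟨q, hsq, hqz, hxq⟩ := hex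
    exact ⟨q, hxq, hsq, hz.trans (h.Bset_subset_of_adj (by grind) (by omega) (by omega))⟩
  push Not at hex
  obtain ⟨t, ht⟩ := h.nonempty_Aset hsz
  have ht' : t ∈ nbrs G s z 2 := by grind [Aset]
  exact ⟨t, h.dist_eq_three_of_mem_nbrs_of_forall hxs hxz hsz hex ht', ht.1,
    hz.trans (h.Bset_subset_of_mem_nbrs_of_forall hxs hxz hsz
      ((h.Bset_eq_of_subset hz (by omega)).ge.trans hsub) hex ht')⟩

theorem exists_common_nbr_dist_ne_one (h : IsBalanced G b c a c₃ a₃) {p : V}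
    (hzp : G.dist z p = 2) (hrp : G.dist r p = 2) (hzt : G.dist z t = 1) (htp : G.dist t p = 2)
    (hall : ∀ q, G.dist z q = 1 → G.dist q p = 1 → G.dist r q = 1) :
    ∃ q, G.dist p q = 1 ∧ G.dist t q = 1 ∧ G.dist r q ≠ 1 := by
  by_contra! hcon
  have hcommon : nbrs G p t 1 = nbrs G p r 1 :=
    Finset.eq_of_subset_of_card_le (by grind) (by rw [h.card_c₂ (by grind), h.card_c₂ (by grind)])
  obtain ⟨q, hzq, hqp⟩ := exists_dist_eq_one_of_dist_eq_add_one h.connected hzp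
  have hq : q ∈ nbrs G p r 1 := by grind
  rw [← hcommon] at hq
  exact h.no_triangle (x := q) (y := t) (z := z) (by grind) (by grind) (by grind)

theorem Bset_subset_of_mem_BHull_two_of_adj (h : IsBalanced G b c a c₃ a₃)
    (hrx : G.dist r x = 1) (hrz : G.dist r z = 2) (hxz : G.dist x z = 3) (hu : u ∈ BHull G r z)
    (hru : G.dist r u = 2) (hw : w ∈ BHull G r z) (hrw : G.dist r w = 2) (huw : G.dist u w = 1) :
    Bset G x u ⊆ Bset G x w := by
  have hxu := dist_eq_dist_add_one_of_mem_BHull hrx (by omega) hu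
  have hxw := dist_eq_dist_add_one_of_mem_BHull hrx (by omega) hw
  exact h.Bset_subset_of_adj huw (by omega) (by omega)

theorem Bset_subset_of_mem_BHull_two_of_common_nbr (h : IsBalanced G b c a c₃ a₃)
    (hrx : G.dist r x = 1) (hrz : G.dist r z = 2) (hxz : G.dist x z = 3) (hu : u ∈ BHull G r z)
    (hru : G.dist r u = 2) (hw : w ∈ BHull G r z) (hrw : G.dist r w = 2) (huw : G.dist u w = 2)
    (huv : G.dist u v = 1) (hvw : G.dist v w = 1) (hrv : G.dist r v ≠ 1) :
    Bset G x u ⊆ Bset G x w := by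
  have hv : v ∈ BHull G r z := h.isHullTransportable_two.mem_BHull_of_weakGeodetic h.toIsBRigid
    (by simp) hrz hu hw (by omega)
  have hrv₂ : G.dist r v = 2 := by have := hv.1; grind
  exact (h.Bset_subset_of_mem_BHull_two_of_adj hrx hrz hxz hu hru hv hrv₂ huv).trans
    (h.Bset_subset_of_mem_BHull_two_of_adj hrx hrz hxz hv hrv₂ hw hrw hvw)

/-- Two vertices of the hull at distance two are joined by a path avoiding the neighbours of `r`,
unless all their common neighbours are adjacent to `r`; in that case a detour through a neighbour
of `z` helps. -/
theorem Bset_subset_of_mem_BHull_two (h : IsBalanced G b c a c₃ a₃) (hrx : G.dist r x = 1)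
    (hrz : G.dist r z = 2) (hxz : G.dist x z = 3) {p : V} (hp : p ∈ BHull G r z)
    (hrp : G.dist r p = 2) : Bset G x z ⊆ Bset G x p := by
  have hT := h.isHullTransportable_two
  have hz : z ∈ BHull G r z := right_mem_BHull
  have hzp := hT.dist_le h.toIsBRigid (by simp) hrz hz hp
  by_cases hzp0 : G.dist z p = 0
  · rw [h.eq_of_dist_eq_zero hzp0]
  by_cases hzp1 : G.dist z p = 1
  · exact h.Bset_subset_of_mem_BHull_two_of_adj hrx hrz hxz hz hrz hp hrp hzp1
  by_cases hex : ∃ e, G.dist z e = 1 ∧ G.dist e p = 1 ∧ G.dist r e ≠ 1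
  · obtain ⟨e, hze, hep, hre⟩ := hex
    exact h.Bset_subset_of_mem_BHull_two_of_common_nbr hrx hrz hxz hz hrz hp hrp (by omega) hze
      hep hre
  push Not at hex
  obtain ⟨t, ht⟩ := h.nonempty_Aset (x := z) (y := r) (by grind)
  have hrt : G.dist r t = 2 := by grind [Aset]
  have htH : t ∈ BHull G r z := h.mem_BHull_of_adj (by omega) hz ht.1 (by omega)
  refine (h.Bset_subset_of_mem_BHull_two_of_adj hrx hrz hxz hz hrz htH hrt ht.1).trans ?_
  have htp := hT.dist_le h.toIsBRigid (by simp) hrz htH hp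
  by_cases htp0 : G.dist t p = 0
  · rw [h.eq_of_dist_eq_zero htp0]
  by_cases htp1 : G.dist t p = 1
  · exact h.Bset_subset_of_mem_BHull_two_of_adj hrx hrz hxz htH hrt hp hrp htp1
  obtain ⟨e, hpe, hte, hre⟩ :=
    h.exists_common_nbr_dist_ne_one (by omega) hrp ht.1 (by omega : G.dist t p = 2) hex
  exact h.Bset_subset_of_mem_BHull_two_of_common_nbr hrx hrz hxz htH hrt hp hrp (by omega) hte
    (by grind) hre

/-- The deficiency of `u` with respect to `v` and `w`, which for an edge `vw` vanishes if and only
if `w` is one step farther from `u` than `v` is. Unlike that condition it satisfies a balanced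
set relation. -/
noncomputable def weightDefect (G : SimpleGraph V) (b : ℝ) (v w u : V) : ℝ :=
  b * b ^ (5 - G.dist w u) - b ^ (5 - G.dist v u)

theorem balanced_weightDefect (h : IsBalanced G b c a c₃ a₃) (hxy : G.dist x y = 2)
    (hvx : G.dist v x ≤ 4) (hvy : G.dist v y ≤ 4) (hwx : G.dist w x ≤ 4) (hwy : G.dist w y ≤ 4) :
    (∑ u ∈ nbrs G x y 2, weightDefect G b v w u) - ∑ u ∈ nbrs G y x 2, weightDefect G b v w u =
      (1 + b - c) * (weightDefect G b v w x - weightDefect G b v w y) := by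
  have hv := h.balanced_a₂ v hxy hvx hvy
  have hw := h.balanced_a₂ w hxy hwx hwy
  simp only [weightDefect, Finset.sum_sub_distrib, ← Finset.mul_sum]
  simp only [weightSum] at hv hw
  linear_combination b * hw - hv

theorem weightDefect_eq_zero_iff (h : IsBalanced G b c a c₃ a₃) (hvw : G.dist v w = 1)
    (hvu : G.dist v u ≤ 4) : weightDefect G b v w u = 0 ↔ G.dist w u = G.dist v u + 1 := by
  rw [weightDefect, ← pow_succ', sub_eq_zero]
  have hb := h.b_le
  have hne := pow_ne_zero (5 - G.dist v u) h.b_ne_zero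
  refine ⟨fun heq => ?_, fun e => by rw [e]; congr 1; omega⟩
  by_contra hc
  rcases (by grind : G.dist w u = G.dist v u ∨ G.dist w u + 1 = G.dist v u) with e | e
  · rw [e, pow_succ] at heq
    have := mul_right_eq_self₀.1 heq
    grind
  · rw [show 5 - G.dist w u + 1 = 5 - G.dist v u + 2 by omega, pow_add] at heq
    have := (mul_right_eq_self₀.1 heq).resolve_right hne
    nlinarith

theorem weightDefect_eq_of_forall (h : IsBalanced G b c a c₃ a₃) (hrz : G.dist r z = 2)
    (hs : s ∈ nbrs G r z 1) (hv : ∀ u ∈ BHull G r z, G.dist v u ≤ 4)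
    (hw : ∀ u ∈ BHull G r z, G.dist w u ≤ 4)
    (hzero : ∀ u ∈ BHull G r z, G.dist r u = 2 → weightDefect G b v w u = 0)
    (hu : u ∈ nbrs G r z 2) : weightDefect G b v w u = weightDefect G b v w s := by
  have hclosed : ∀ {u v w}, u ∈ BHull G r z → w ∈ BHull G r z →
      G.dist u v + G.dist v w ≤ G.dist u w + 1 → v ∈ BHull G r z :=
    h.isHullTransportable_two.mem_BHull_of_weakGeodetic h.toIsBRigid (by simp) hrz
  have hz : z ∈ BHull G r z := right_mem_BHull
  have hr : r ∈ BHull G r z := left_mem_BHull h.connected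
  have hsH : s ∈ BHull G r z := hclosed hr hz (by grind)
  have huH : u ∈ BHull G r z := hclosed hr hz (by grind)
  have hsu : G.dist s u = 2 := by
    have := h.no_triangle (x := s) (y := r) (z := u)
    have := h.eq_of_dist_eq_zero (x := s) (y := u)
    grind
  have hbal := h.balanced_weightDefect (v := v) (w := w) hsu (hv s hsH) (hv u huH) (hw s hsH)
    (hw u huH)
  have hdist : ∀ e, e ∈ nbrs G s u 2 ∨ e ∈ nbrs G u s 2 → G.dist r e = 2 := by
    intro e he
    have := h.no_triangle (x := r) (y := s) (z := e)
    have := h.no_triangle (x := r) (y := u) (z := e)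
    have := h.eq_of_dist_eq_zero (x := r) (y := e)
    grind
  rw [Finset.sum_eq_zero fun e he => hzero e (hclosed hsH huH (by grind)) (hdist e (.inl he)),
    Finset.sum_eq_zero fun e he => hzero e (hclosed hsH huH (by grind)) (hdist e (.inr he)),
    sub_self, eq_comm, mul_eq_zero] at hbal
  linarith [hbal.resolve_left h.sub_neg.ne]

theorem weightDefect_eq_zero_of_mem_nbrs (h : IsBalanced G b c a c₃ a₃) (hrz : G.dist r z = 2)
    (hs : s ∈ nbrs G r z 1) (hv : ∀ u ∈ BHull G r z, G.dist v u ≤ 4)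
    (hw : ∀ u ∈ BHull G r z, G.dist w u ≤ 4) (hr : weightDefect G b v w r = 0)
    (hzero : ∀ u ∈ BHull G r z, G.dist r u = 2 → weightDefect G b v w u = 0) :
    weightDefect G b v w s = 0 := by
  have hz : z ∈ BHull G r z := right_mem_BHull
  have hrH : r ∈ BHull G r z := left_mem_BHull h.connected
  have hbal := h.balanced_weightDefect (v := v) (w := w) hrz (hv r hrH) (hv z hz) (hw r hrH)
    (hw z hz)
  rw [hr, hzero z hz hrz, Finset.sum_congr rfl fun u hu =>
      h.weightDefect_eq_of_forall hrz hs hv hw hzero hu, Finset.sum_eq_zero fun u hu =>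
      hzero u (h.mem_BHull_of_adj (by omega) hz (by grind) (by grind)) (by grind),
    Finset.sum_const, h.card_a₂ hrz] at hbal
  have ha := h.a_pos
  simpa [ha.ne'] using hbal

theorem mem_BHull_of_dist_eq_two (h : IsBalanced G b c a c₃ a₃) (hxv : G.dist x v = 1)
    (hxy : G.dist x y = 3) (hvy : G.dist v y = 3) (hxs : G.dist x s = 2)
    (hsub : Bset G x y ⊆ Bset G x s) : s ∈ BHull G v y := by
  refine ⟨by grind, fun w hw => ⟨hw.1, ?_⟩⟩
  obtain ⟨r, hxr, hrs⟩ := exists_dist_eq_one_of_dist_eq_add_one h.connected hxs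
  obtain ⟨z, hxz, hsz, hz⟩ := h.exists_dist_three_one_Bset_subset hxy hxs hsub
  have hrz : G.dist r z = 2 := by grind
  have hfar : ∀ u ∈ BHull G v y, G.dist w u = G.dist v u + 1 := fun u hu => by
    have := hu.2 hw
    grind [Bset]
  have hyr := dist_le_of_Bset_subset h.connected hsub hxr (by grind)
  have hr := h.mem_BHull_of_dist_eq_one hxv hxy hvy hxr (by grind)
  have hQ : ∀ u ∈ BHull G r z, G.dist r u = 2 → u ∈ BHull G v y := by
    intro u hu hru
    have hzu := h.Bset_subset_of_mem_BHull_two (by grind) hrz hxz hu hru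
    have hx : x ∈ Bset G r z := ⟨by grind, by grind⟩
    have hxu : G.dist u x = G.dist r u + 1 := (hu.2 hx).2
    have hxu : G.dist x u = 3 := by grind
    exact h.mem_BHull_of_dist_eq_three hxv hxy hvy hxu (hz.trans hzu)
  have hle : ∀ u ∈ BHull G r z, G.dist v u ≤ 3 := by
    intro u hu
    have := hu.1
    by_cases hru : G.dist r u = 2
    · exact (hQ u hu hru).1.trans hvy.le
    · grind
  have hvw := hw.1
  have hs0 := h.weightDefect_eq_zero_of_mem_nbrs (v := v) (w := w) (s := s) hrz (by grind)
    (fun u hu => by grind) (fun u hu => by grind)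
    ((h.weightDefect_eq_zero_iff hvw (by grind)).2 (hfar r hr))
    (fun u hu hru => (h.weightDefect_eq_zero_iff hvw (by grind)).2 (hfar u (hQ u hu hru)))
  have := (h.weightDefect_eq_zero_iff hvw (by grind)).1 hs0
  grind

theorem BHull_subset_of_dist_eq_three (h : IsBalanced G b c a c₃ a₃) (hxv : G.dist x v = 1)
    (hxy : G.dist x y = 3) (hvy : G.dist v y = 3) : BHull G x y ⊆ BHull G v y := by
  rintro s ⟨hxs, hsub⟩
  by_cases e3 : G.dist x s = 3
  · exact h.mem_BHull_of_dist_eq_three hxv hxy hvy e3 hsub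
  by_cases e2 : G.dist x s = 2
  · exact h.mem_BHull_of_dist_eq_two hxv hxy hvy e2 hsub
  by_cases e1 : G.dist x s = 1
  · have := dist_le_of_Bset_subset h.connected hsub e1 (by grind)
    exact h.mem_BHull_of_dist_eq_one hxv hxy hvy e1 (by grind)
  obtain rfl := h.eq_of_dist_eq_zero (x := x) (y := s) (by omega)
  exact ⟨by grind, h.Bset_subset_of_dist_eq_one (by grind) (by grind)⟩

theorem isHullTransportable_three (h : IsBalanced G b c a c₃ a₃) : IsHullTransportable G 3 where
  BHull_subset := h.BHull_subset_of_dist_eq_three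
  exists_adj := h.exists_adj_dist_eq_three

theorem Delta_eq_BHull (h : IsBalanced G b c a c₃ a₃) (hxy : G.dist x y = 3) :
    Delta G x y = BHull G x y := by
  refine (Delta_subset_BHull h.connected hxy).antisymm ?_
  rintro u ⟨hxu, hsub⟩
  suffices ∃ z, G.dist x z = 3 ∧ Bset G x y ⊆ Bset G x z ∧ G.dist x u + G.dist u z = 3 by
    obtain ⟨z, hxz, hz, huz⟩ := this
    exact ⟨z, ⟨hxz, (h.Bset_eq_of_subset hz (by omega)).symm⟩, by omega⟩
  by_cases e3 : G.dist x u = 3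
  · exact ⟨u, e3, hsub, by grind⟩
  by_cases e2 : G.dist x u = 2
  · obtain ⟨z, hxz, huz, hz⟩ := h.exists_dist_three_one_Bset_subset hxy e2 hsub
    exact ⟨z, hxz, hz, by omega⟩
  by_cases e1 : G.dist x u = 1
  · have := dist_le_of_Bset_subset h.connected hsub e1 (by grind)
    by_cases huy : G.dist u y = 2
    · exact ⟨y, hxy, subset_rfl, by omega⟩
    · obtain ⟨z, hyz, huz, hxz⟩ := h.exists_adj_dist_three_two e1 hxy (by grind)
      exact ⟨z, hxz, h.Bset_subset_of_adj hyz (by omega) (by omega), by omega⟩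
  obtain rfl := h.eq_of_dist_eq_zero (x := x) (y := u) (by omega)
  exact ⟨y, hxy, subset_rfl, by omega⟩

theorem mem_BHull_iff_of_dist_eq_one (h : IsBalanced G b c a c₃ a₃) (huz : G.dist u z = 3)
    (huw : G.dist u w = 1) : w ∈ BHull G u z ↔ G.dist z w = 2 ∨ G.dist z w = 3 := by
  have hu : u ∈ BHull G u z := left_mem_BHull h.connected
  refine ⟨fun hw => ?_, fun hw => ?_⟩
  · have := h.dist_le_three_of_mem_BHull huz hw
    grind
  · exact h.isHullTransportable_three.mem_BHull_of_weakGeodetic h.toIsBRigid le_rfl huz hu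
      right_mem_BHull (by grind)

theorem ncard_nbrs_in_BHull (h : IsBalanced G b c a c₃ a₃) (hxy : G.dist x y = 3)
    (hu : u ∈ BHull G x y) : {w | w ∈ BHull G x y ∧ G.Adj u w}.ncard = a₃ + c₃ := by
  classical
  obtain ⟨z, huz, e⟩ := h.isHullTransportable_three.exists_BHull_eq h.toIsBRigid le_rfl hxy hu
  have : {w | w ∈ BHull G x y ∧ G.Adj u w} = ↑(nbrs G u z 3 ∪ nbrs G u z 2) := by
    ext w
    have := h.mem_BHull_iff_of_dist_eq_one huz (w := w)
    simp only [e, ← SimpleGraph.dist_eq_one_iff_adj]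
    grind
  rw [this, Set.ncard_coe_finset, Finset.card_union_of_disjoint
    (Finset.disjoint_left.2 (by grind)), h.card_a₃ huz, h.card_c₃ huz]

end IsBalanced

theorem exists_induce_walk_length_eq_dist (hG : G.Connected) {S : Set V}
    (hS : ∀ {u v w}, u ∈ S → w ∈ S → G.dist u v + G.dist v w = G.dist u w → v ∈ S) (u v : S) :
    ∃ p : (G.induce S).Walk u v, p.length = G.dist (u : V) v := by
  induction n : G.dist (u : V) v generalizing u with
  | zero =>
    obtain rfl := Subtype.ext (hG.dist_eq_zero_iff.1 n)
    exact ⟨.nil, rfl⟩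
  | succ n ih =>
    obtain ⟨z, huz, hzv⟩ := exists_dist_eq_one_of_dist_eq_add_one hG n
    obtain ⟨p, hp⟩ := ih ⟨z, hS u.2 v.2 (by omega)⟩ hzv
    have hadj : G.Adj u z := SimpleGraph.dist_eq_one_iff_adj.1 huz
    exact ⟨.cons (SimpleGraph.induce_adj.2 hadj) p, by simp [hp]⟩

theorem dist_induce_eq (hG : G.Connected) {S : Set V}
    (hS : ∀ {u v w}, u ∈ S → w ∈ S → G.dist u v + G.dist v w = G.dist u w → v ∈ S) (u v : S) :
    (G.induce S).dist u v = G.dist (u : V) v := by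
  obtain ⟨p, hp⟩ := exists_induce_walk_length_eq_dist hG hS u v
  refine (hp ▸ SimpleGraph.dist_le p).antisymm ?_
  obtain ⟨q, hq⟩ := p.reachable.exists_walk_length_eq_dist
  have := SimpleGraph.dist_le (q.map (SimpleGraph.Embedding.induce S).toHom)
  rwa [SimpleGraph.Walk.length_map, hq] at this

/-! ### The tridiagonal relation -/

/-- The commutator of `a` with `a²k - (t - 1)aka + ka² - g(ak + ka) - rk`, as a linear map in `k`.
Terwilliger's tridiagonal relation for `a` and `k` is the vanishing of this expression. -/
def tridiagonal {R A : Type*} [CommRing R] [Ring A] [Algebra R A] (a : A) (t g r : R) :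
    A →ₗ[R] A where
  toFun k := a ^ 3 * k - t • (a ^ 2 * k * a) + t • (a * k * a ^ 2) - k * a ^ 3 -
    g • (a ^ 2 * k - k * a ^ 2) - r • (a * k - k * a)
  map_add' k l := by
    simp only [mul_add, add_mul]
    module
  map_smul' m k := by
    simp only [mul_smul_comm, smul_mul_assoc, RingHom.id_apply]
    module

section Tridiagonal

variable {R A : Type*} [CommRing R] [Ring A] [Algebra R A] {a k : A} {t g r : R}

theorem tridiagonal_apply : tridiagonal a t g r k =
    a ^ 3 * k - t • (a ^ 2 * k * a) + t • (a * k * a ^ 2) - k * a ^ 3 -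
      g • (a ^ 2 * k - k * a ^ 2) - r • (a * k - k * a) := rfl

theorem tridiagonal_one : tridiagonal a t g r 1 = 0 := by
  simp only [tridiagonal_apply, mul_one, one_mul, ← pow_succ, ← pow_succ']
  module

theorem tridiagonal_add_smul_one (m : R) :
    tridiagonal a t g r (k + m • 1) = tridiagonal a t g r k := by
  rw [map_add, map_smul, tridiagonal_one, smul_zero, add_zero]

/-- In this combination the word `a²ka²` cancels. -/
theorem mul_tridiagonal_add_tridiagonal_mul :
    a * tridiagonal a t g r k + tridiagonal a t g r k * a =
      a ^ 4 * k - (t - 1) • (a ^ 3 * k * a) + (t - 1) • (a * k * a ^ 3) - k * a ^ 4 -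
        g • (a ^ 3 * k - k * a ^ 3 + a ^ 2 * k * a - a * k * a ^ 2) -
        r • (a ^ 2 * k - k * a ^ 2) := by
  simp only [tridiagonal_apply, mul_add, add_mul, mul_sub, sub_mul, smul_mul_assoc,
    mul_smul_comm, pow_succ, pow_zero, one_mul, mul_assoc]
  module

end Tridiagonal

open Matrix in
/-- The squared norms of the sums `F w = ∑ t, Θ w t • e t` add up to a multiple of
`∑ s, ⟪F s, e s⟫`, because `Θ` is a multiple of a projection. -/
theorem sum_smul_eq_zero_of_trace_eq_zero {ι m n : Type*} [Fintype ι] [Fintype m] [Fintype n]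
    {Θ : Matrix ι ι ℝ} {c μ : ℝ} (hΘ : Θ.IsSymm) (hc : c ≠ 0) (hsq : c • (Θ * Θ) = μ • Θ)
    (e : ι → Matrix m n ℝ) (h : ∀ s, trace ((∑ t, Θ s t • e t)ᵀ * e s) = 0) (w : ι) :
    ∑ t, Θ w t • e t = 0 := by
  set F : ι → Matrix m n ℝ := fun w => ∑ t, Θ w t • e t with hF
  have hproj : ∀ s, c • ∑ w, Θ s w • F w = μ • F s := by
    intro s
    have hrow : ∀ t, c * ∑ w, Θ s w * Θ w t = μ * Θ s t := fun t => by
      simpa [Matrix.mul_apply] using congrFun (congrFun hsq s) t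
    simp only [hF, Finset.smul_sum, smul_smul]
    rw [Finset.sum_comm]
    refine Finset.sum_congr rfl fun t _ => ?_
    rw [← hrow, Finset.mul_sum, Finset.sum_smul]
  have hnorm : c * ∑ w, trace ((F w)ᵀ * F w) = 0 := by
    calc c * ∑ w, trace ((F w)ᵀ * F w)
        = ∑ s, trace ((c • ∑ w, Θ s w • F w)ᵀ * e s) := by
          simp only [transpose_smul, transpose_sum, smul_mul, Matrix.sum_mul, trace_smul,
            trace_sum, smul_eq_mul, ← Finset.mul_sum]
          rw [Finset.sum_comm]
          congr 1
          refine Finset.sum_congr rfl fun w _ => ?_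
          nth_rewrite 2 [hF]
          simp only [Matrix.mul_sum, Matrix.mul_smul, trace_sum, trace_smul, smul_eq_mul,
            hΘ.apply w]
      _ = 0 := by
          refine Finset.sum_eq_zero fun s _ => ?_
          rw [hproj, transpose_smul, smul_mul, trace_smul, h, smul_zero]
  have hnonneg : ∀ w ∈ Finset.univ, 0 ≤ trace ((F w)ᵀ * F w) := fun w _ => by
    simpa using (posSemidef_conjTranspose_mul_self (F w)).trace_nonneg
  have := (Finset.sum_eq_zero_iff_of_nonneg hnonneg).1 ((mul_eq_zero.1 hnorm).resolve_left hc) w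
    (Finset.mem_univ w)
  rwa [← conjTranspose_eq_transpose_of_trivial, trace_conjTranspose_mul_self_eq_zero_iff] at this

section Projection

open Matrix

variable {ι : Type*} [Fintype ι] [DecidableEq ι] {A M : Matrix ι ι ℝ} {t g r : ℝ} {s : ι}

theorem trace_transpose_mul_tridiagonal_single (hA : A.IsSymm)
    (h : ∀ n, M * A ^ n * single s s 1 = 0) :
    trace (Mᵀ * tridiagonal A t g r (single s s 1)) = 0 := by
  have hterm : ∀ m n, trace (Mᵀ * (A ^ m * single s s 1 * A ^ n)) = 0 := by
    intro m n
    have hT : single s s 1 * A ^ n * Mᵀ = 0 := by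
      have := congrArg transpose (h n)
      simpa [transpose_mul, transpose_pow, hA.eq, Matrix.mul_assoc] using this
    rw [trace_mul_comm, Matrix.mul_assoc, Matrix.mul_assoc, ← Matrix.mul_assoc (single _ _ _), hT,
      Matrix.mul_zero, trace_zero]
  have h₀ := fun m => hterm m 0
  have h₁ := fun m => hterm m 1
  have h₀' := hterm 0
  have h₁' := hterm 1
  simp only [pow_zero, pow_one, mul_one, one_mul] at h₀ h₁ h₀' h₁'
  have h₁₀ := h₀ 1
  have h₀₁ := h₁ 0
  simp only [pow_zero, pow_one, one_mul] at h₁₀ h₀₁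
  simp [tridiagonal_apply, mul_sub, mul_add, trace_sub, trace_add, trace_smul, h₀, h₁, h₀', h₁',
    h₁₀, h₀₁]

theorem tridiagonal_diagonal_eq_zero {Θ : Matrix ι ι ℝ} {c μ : ℝ} (hA : A.IsSymm)
    (hΘ : Θ.IsSymm) (hc : c ≠ 0) (hsq : c • (Θ * Θ) = μ • Θ)
    (h : ∀ s n, tridiagonal A t g r (diagonal (Θ s)) * A ^ n * single s s 1 = 0) (w : ι) :
    tridiagonal A t g r (diagonal (Θ w)) = 0 := by
  have hsum : ∀ w, tridiagonal A t g r (diagonal (Θ w)) =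
      ∑ s, Θ w s • tridiagonal A t g r (single s s 1) := by
    intro w
    simp only [← sum_single_eq_diagonal, map_sum, ← map_smul, smul_single, smul_eq_mul, mul_one]
  rw [hsum]
  refine sum_smul_eq_zero_of_trace_eq_zero hΘ hc hsq _ (fun s => ?_) w
  rw [← hsum]
  exact trace_transpose_mul_tridiagonal_single hA (h s)

end Projection

/-! ### Three-term operators -/

/-- The operator `φ ↦ (i ↦ cᵢ φᵢ₋₁ + aᵢ φᵢ + eᵢ φᵢ₊₁)`, by which the adjacency operator acts on
functions of the distance to a fixed vertex; `e` stands for the intersection numbers `bᵢ`.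
The index runs over all integers so that identities need no boundary cases. -/
def radialOp (c a e : ℤ → ℝ) : Module.End ℝ (ℤ → ℝ) where
  toFun φ i := c i * φ (i - 1) + a i * φ i + e i * φ (i + 1)
  map_add' φ ψ := by
    ext i
    simp only [Pi.add_apply]
    ring
  map_smul' m φ := by
    ext i
    simp only [Pi.smul_apply, smul_eq_mul, RingHom.id_apply]
    ring

section RadialOp

variable {c a e K φ ψ : ℤ → ℝ} {b t g r θ : ℝ}

theorem radialOp_apply (i : ℤ) :
    radialOp c a e φ i = c i * φ (i - 1) + a i * φ i + e i * φ (i + 1) := rfl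

/-- Terms of the relation shifting the index by `±3`, `±2`, `±1` vanish by `ht`, `hlin` and `hquad`
respectively, and those preserving the index cancel. -/
theorem tridiagonal_radialOp_eq_zero (ht : 1 - t * b + t * b ^ 2 - b ^ 3 = 0)
    (hlin : ∀ i, (1 + b - t * b) * a i + (1 + b) * a (i + 1) + (1 + b - t) * a (i + 1 + 1) =
      g * (1 + b))
    (hquad : ∀ i, b * (a i ^ 2 + (1 - t) * a i * a (i + 1) + a (i + 1) ^ 2 +
      (1 - t * b) * c i * e (i - 1) + (1 + t) * e i * c (i + 1)) +
      (b - t) * e (i + 1) * c (i + 1 + 1) = b * (g * (a i + a (i + 1)) + r))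
    (hK : ∀ i, K i = b * K (i + 1)) :
    tridiagonal (radialOp c a e) t g r (LinearMap.mulLeft ℝ K) = 0 := by
  ext φ i
  obtain ⟨j, rfl⟩ : ∃ j, i = j + 1 + 1 + 1 := ⟨i - 3, by ring⟩
  simp only [tridiagonal_apply, pow_succ, pow_zero, one_mul, LinearMap.sub_apply,
    LinearMap.add_apply, LinearMap.smul_apply, Module.End.mul_apply, LinearMap.mulLeft_apply,
    Pi.sub_apply, Pi.add_apply, Pi.smul_apply, Pi.mul_apply, smul_eq_mul, radialOp_apply,
    add_sub_cancel_right, LinearMap.zero_apply, Pi.zero_apply]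
  rw [hK j, hK (j + 1), hK (j + 1 + 1), hK (j + 1 + 1 + 1), hK (j + 1 + 1 + 1 + 1),
    hK (j + 1 + 1 + 1 + 1 + 1)]
  have hlinU := hlin (j + 1 + 1 + 1)
  have hlinD := hlin (j + 1)
  have hquadU := hquad (j + 1 + 1 + 1)
  have hquadD := hquad (j + 1 + 1)
  simp only [add_sub_cancel_right] at hquadU hquadD
  linear_combination K (j + 1 + 1 + 1 + 1 + 1 + 1) *
    (e (j + 1 + 1 + 1) * e (j + 1 + 1 + 1 + 1) * e (j + 1 + 1 + 1 + 1 + 1) *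
        φ (j + 1 + 1 + 1 + 1 + 1 + 1) * ht -
      b ^ 3 * c (j + 1 + 1 + 1) * c (j + 1 + 1) * c (j + 1) * φ j * ht +
      (1 - b) * b * e (j + 1 + 1 + 1) * e (j + 1 + 1 + 1 + 1) * φ (j + 1 + 1 + 1 + 1 + 1) * hlinU -
      (1 - b) * b ^ 3 * c (j + 1 + 1 + 1) * c (j + 1 + 1) * φ (j + 1) * hlinD +
      (1 - b) * b * e (j + 1 + 1 + 1) * φ (j + 1 + 1 + 1 + 1) * hquadU -
      (1 - b) * b ^ 2 * c (j + 1 + 1 + 1) * φ (j + 1 + 1) * hquadD)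

theorem mul_eq_mul_of_radialOp_eq {D : ℕ} (hc : c 0 = 0) (he : ∀ i : ℕ, i < D → e i ≠ 0)
    (hφ : ∀ i : ℕ, i ≤ D → radialOp c a e φ i = θ * φ i)
    (hψ : ∀ i : ℕ, i ≤ D → radialOp c a e ψ i = θ * ψ i) {i : ℕ} (hi : i ≤ D) :
    ψ 0 * φ i = φ 0 * ψ i := by
  induction i using Nat.strong_induction_on with
  | _ i ih =>
    obtain _ | i := i
    · exact mul_comm _ _
    have hpred : c i * (ψ 0 * φ (i - 1)) = c i * (φ 0 * ψ (i - 1)) := by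
      obtain _ | i := i
      · simp [hc]
      · have := ih i (by omega) (by omega)
        push_cast
        rw [add_sub_cancel_right, this]
    have h₁ := hφ i (by omega)
    have h₂ := hψ i (by omega)
    rw [radialOp_apply] at h₁ h₂
    apply mul_left_cancel₀ (he i hi)
    push_cast
    linear_combination ψ 0 * h₁ - φ 0 * h₂ - (a i - θ) * ih i (by omega) (by omega) - hpred

end RadialOp

/-- `walkCount c a e n i` is the number of walks of length `n` between two vertices at distance `i`
of a graph with intersection numbers `c`, `a`, `e`. -/
def walkCount (c a e : ℤ → ℝ) (n : ℕ) : ℤ → ℝ := (radialOp c a e ^ n) (Pi.single 0 1)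

section WalkCount

variable {c a e : ℤ → ℝ} {n : ℕ} {i : ℤ}

theorem walkCount_zero : walkCount c a e 0 i = if i = 0 then 1 else 0 := by
  simp [walkCount, Pi.single_apply]

theorem walkCount_succ : walkCount c a e (n + 1) i = c i * walkCount c a e n (i - 1) +
    a i * walkCount c a e n i + e i * walkCount c a e n (i + 1) := by
  rw [walkCount, pow_succ', Module.End.mul_apply, radialOp_apply, walkCount]

end WalkCount

/-! ### Functions of the distance -/

/-- `G` is connected and has intersection numbers `cᵢ`, `aᵢ`, `eᵢ` at each distance `i` that
occurs, `e` standing for `b`. For `u = v` the truncated subtraction in `card_sub` is harmless: no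
neighbour of `u` is at distance `0` from `u`. -/
structure HasRadialCoeffs [Fintype V] (G : SimpleGraph V) (c a e : ℤ → ℝ) : Prop where
  connected : G.Connected
  card_sub : ∀ u v, #(nbrs G u v (G.dist v u - 1)) = c (G.dist v u)
  card_self : ∀ u v, #(nbrs G u v (G.dist v u)) = a (G.dist v u)
  card_add : ∀ u v, #(nbrs G u v (G.dist v u + 1)) = e (G.dist v u)

theorem HasRadialCoeffs.c_zero [Fintype V] {c a e : ℤ → ℝ} (h : HasRadialCoeffs G c a e) :
    c 0 = 0 := by
  obtain ⟨v⟩ := h.connected.nonempty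
  have hempty : nbrs G v v 0 = ∅ := by
    ext w
    grind
  simpa [hempty] using (h.card_sub v v).symm

section Radial

open Matrix

variable [Fintype V] [DecidableRel G.Adj] {c a e φ K : ℤ → ℝ} {κ : V → ℝ} {t g r : ℝ}

theorem adjMatrix_mulVec_mul_radial (hG : G.Connected) (κ : V → ℝ) (φ : ℤ → ℝ) (u v : V) :
    (G.adjMatrix ℝ *ᵥ fun y => κ y * φ (G.dist v y)) u =
      φ (G.dist v u - 1) * ∑ y ∈ nbrs G u v (G.dist v u - 1), κ y +
      φ (G.dist v u) * ∑ y ∈ nbrs G u v (G.dist v u), κ y +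
      φ (G.dist v u + 1) * ∑ y ∈ nbrs G u v (G.dist v u + 1), κ y := by
  have hterm : ∀ y, (if G.Adj u y then κ y * φ (G.dist v y) else 0) =
      (if G.dist u y = 1 ∧ G.dist v y = G.dist v u - 1 then φ (G.dist v u - 1) * κ y else 0) +
      (if G.dist u y = 1 ∧ G.dist v y = G.dist v u then φ (G.dist v u) * κ y else 0) +
      (if G.dist u y = 1 ∧ G.dist v y = G.dist v u + 1 then φ (G.dist v u + 1) * κ y else 0) := by
    intro y
    simp only [← SimpleGraph.dist_eq_one_iff_adj]
    by_cases hy : G.dist u y = 1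
    · rcases (by grind : G.dist v y + 1 = G.dist v u ∨ G.dist v y = G.dist v u ∨
        G.dist v y = G.dist v u + 1) with hv | hv | hv
      · have : G.dist v y ≠ G.dist v y + 1 + 1 := by omega
        simp [hy, ← hv, this, mul_comm]
      · have : G.dist v u ≠ G.dist v u - 1 := by grind
        simp [hy, hv, this, mul_comm]
      · have : G.dist v u + 1 ≠ G.dist v u - 1 := by omega
        simp [hy, hv, this, mul_comm]
    · simp [hy]
  simp only [mulVec, dotProduct, SimpleGraph.adjMatrix_apply, ite_mul, one_mul, zero_mul, hterm,
    Finset.sum_add_distrib, ← Finset.sum_filter, ← Finset.mul_sum, nbrs]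

namespace HasRadialCoeffs

theorem adjMatrix_mulVec (h : HasRadialCoeffs G c a e) (φ : ℤ → ℝ) (w : V) :
    (G.adjMatrix ℝ *ᵥ fun v => φ (G.dist w v)) = fun u => radialOp c a e φ (G.dist w u) := by
  ext u
  have := adjMatrix_mulVec_mul_radial h.connected (fun _ => 1) φ u w
  simp only [one_mul, Finset.sum_const, nsmul_eq_mul, mul_one, h.card_sub, h.card_self,
    h.card_add] at this
  rw [this, radialOp_apply]
  ring

variable [DecidableEq V]

theorem adjMatrix_pow_mulVec (h : HasRadialCoeffs G c a e) (n : ℕ) (φ : ℤ → ℝ) (w : V) :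
    (G.adjMatrix ℝ ^ n *ᵥ fun v => φ (G.dist w v)) =
      fun u => (radialOp c a e ^ n) φ (G.dist w u) := by
  induction n generalizing φ with
  | zero => simp
  | succ n ih => rw [pow_succ, pow_succ, ← mulVec_mulVec, h.adjMatrix_mulVec, ih]; rfl

theorem adjMatrix_pow_apply (h : HasRadialCoeffs G c a e) (n : ℕ) (u w : V) :
    (G.adjMatrix ℝ ^ n) u w = walkCount c a e n (G.dist w u) := by
  have hsingle : (fun v => (Pi.single 0 1 : ℤ → ℝ) (G.dist w v)) = Pi.single w 1 := by
    ext v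
    simp [Pi.single_apply, h.connected.dist_eq_zero_iff, eq_comm]
  have := congrFun (h.adjMatrix_pow_mulVec n (Pi.single 0 1) w) u
  rwa [hsingle, mulVec_single_one] at this

theorem tridiagonal_mulVec (h : HasRadialCoeffs G c a e) (K φ : ℤ → ℝ) (w : V) :
    (tridiagonal (G.adjMatrix ℝ) t g r (diagonal fun v => K (G.dist w v)) *ᵥ
      fun v => φ (G.dist w v)) =
    fun u => tridiagonal (radialOp c a e) t g r (LinearMap.mulLeft ℝ K) φ (G.dist w u) := by
  have hdiag : ∀ φ : ℤ → ℝ, (diagonal (fun v => K (G.dist w v)) *ᵥ fun v => φ (G.dist w v)) =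
      fun v => (K * φ) (G.dist w v) := fun φ => by
    ext v
    simp [mulVec_diagonal]
  have hA := h.adjMatrix_mulVec (w := w)
  have hA' := fun n φ => h.adjMatrix_pow_mulVec n φ w
  ext u
  simp only [tridiagonal_apply, sub_mulVec, add_mulVec, smul_mulVec, ← mulVec_mulVec, hA, hA',
    hdiag]
  rfl

theorem tridiagonal_mul_pow_mul_single (h : HasRadialCoeffs G c a e)
    (hK : tridiagonal (radialOp c a e) t g r (LinearMap.mulLeft ℝ K) = 0) (s : V) (n : ℕ) :
    tridiagonal (G.adjMatrix ℝ) t g r (diagonal fun v => K (G.dist s v)) * G.adjMatrix ℝ ^ n *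
      single s s 1 = 0 := by
  ext u v
  by_cases hv : v = s
  · subst hv
    have := congrFun (h.tridiagonal_mulVec (t := t) (g := g) (r := r) K
      (walkCount c a e n) v) u
    simp only [hK, LinearMap.zero_apply, Pi.zero_apply, ← h.adjMatrix_pow_apply] at this
    rw [mul_single_apply_same, mul_one]
    exact this
  · simp [hv]

end HasRadialCoeffs

end Radial

/-! ### The cosine matrix -/

/-- The matrix with entries `φ (∂(u,v))`; for a distance-regular graph these matrices form the
Bose-Mesner algebra. -/
noncomputable def radialMatrix (G : SimpleGraph V) (φ : ℤ → ℝ) : Matrix V V ℝ :=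
  Matrix.of fun u v => φ (G.dist u v)

theorem radialMatrix_isSymm {φ : ℤ → ℝ} : (radialMatrix G φ).IsSymm := by
  ext u v
  simp [radialMatrix, SimpleGraph.dist_comm]

theorem exists_dist_eq_of_le (hG : G.Connected) {n m : ℕ} (h : ∃ x y, G.dist x y = n)
    (hm : m ≤ n) : ∃ x y, G.dist x y = m := by
  induction n, hm using Nat.le_induction with
  | base => exact h
  | succ n _ ih =>
    obtain ⟨x, y, hxy⟩ := h
    obtain ⟨z, -, hzy⟩ := exists_dist_eq_one_of_dist_eq_add_one hG hxy
    exact ih ⟨z, y, hzy⟩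

section RadialMatrix

open Matrix

variable [Fintype V] {D : ℕ} {p : ℕ → ℕ → ℕ → ℕ} {c a e φ ψ Θ : ℤ → ℝ} {t g r θ : ℝ}

theorem exists_radialMatrix_mul_eq (hle : ∀ u v, G.dist u v ≤ D) (hdr : G.IsDistRegularWith D p) :
    ∃ f, radialMatrix G φ * radialMatrix G ψ = radialMatrix G f := by
  refine ⟨fun n => ∑ i ∈ Finset.range (D + 1), ∑ j ∈ Finset.range (D + 1),
    (p n.toNat i j : ℝ) * (φ i * ψ j), ?_⟩
  ext u v
  have hterm : ∀ s, φ (G.dist u s) * ψ (G.dist v s) = ∑ i ∈ Finset.range (D + 1),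
      ∑ j ∈ Finset.range (D + 1), if G.dist u s = i ∧ G.dist v s = j then φ i * ψ j else 0 := by
    intro s
    have hu := Nat.lt_add_one_of_le (hle u s)
    have hv := Nat.lt_add_one_of_le (hle v s)
    simp [ite_and, hu, hv]
  simp only [mul_apply, radialMatrix, of_apply, SimpleGraph.dist_comm (v := v), hterm,
    Int.toNat_natCast]
  rw [Finset.sum_comm]
  refine Finset.sum_congr rfl fun i hi => ?_
  rw [Finset.sum_comm]
  refine Finset.sum_congr rfl fun j hj => ?_
  rw [Finset.mem_range, Nat.lt_succ_iff] at hi hj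
  rw [← Finset.sum_filter, Finset.sum_const, nsmul_eq_mul, G.dist_comm (u := v),
    ← hdr _ i j (hle u v) hi hj u v rfl, ← Set.ncard_coe_finset, Finset.coe_filter_univ]

namespace HasRadialCoeffs

theorem adjMatrix_mul_radialMatrix [DecidableRel G.Adj] (h : HasRadialCoeffs G c a e) :
    G.adjMatrix ℝ * radialMatrix G φ = radialMatrix G (radialOp c a e φ) := by
  ext u v
  have := congrFun (h.adjMatrix_mulVec φ v) u
  simpa [radialMatrix, mul_apply, mulVec, dotProduct, SimpleGraph.dist_comm (u := v)] using this

/-- Both `Θ` and the first row of `(Θ (∂(u,v)))²` solve the three-term recurrence of the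
eigenvalue `θ`, so they are proportional. -/
theorem exists_smul_radialMatrix_mul_self (h : HasRadialCoeffs G c a e)
    (hle : ∀ u v, G.dist u v ≤ D) (hD : ∃ u v, G.dist u v = D) (hdr : G.IsDistRegularWith D p)
    (he : ∀ i : ℕ, i < D → e i ≠ 0) (hΘ : radialOp c a e Θ = θ • Θ) :
    ∃ μ : ℝ, Θ 0 • (radialMatrix G Θ * radialMatrix G Θ) = μ • radialMatrix G Θ := by
  classical
  obtain ⟨f, hf⟩ := exists_radialMatrix_mul_eq (φ := Θ) (ψ := Θ) hle hdr
  have hmul : radialMatrix G (radialOp c a e f) = θ • radialMatrix G f := by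
    rw [← h.adjMatrix_mul_radialMatrix, ← hf, ← Matrix.mul_assoc, h.adjMatrix_mul_radialMatrix, hΘ,
      ← smul_mul]
    rfl
  have hfθ : ∀ i : ℕ, i ≤ D → radialOp c a e f i = θ * f i := by
    intro i hi
    obtain ⟨u, v, rfl⟩ := exists_dist_eq_of_le h.connected hD hi
    exact congrFun (congrFun hmul u) v
  refine ⟨f 0, ?_⟩
  ext u v
  rw [hf]
  exact mul_eq_mul_of_radialOp_eq h.c_zero he hfθ (fun i _ => congrFun hΘ i) (hle u v)

theorem tridiagonal_radial_eq_zero [DecidableEq V] [DecidableRel G.Adj]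
    (h : HasRadialCoeffs G c a e) (hle : ∀ u v, G.dist u v ≤ D) (hD : ∃ u v, G.dist u v = D)
    (hdr : G.IsDistRegularWith D p) (he : ∀ i : ℕ, i < D → e i ≠ 0)
    (hΘ : radialOp c a e Θ = θ • Θ) (hΘ₀ : Θ 0 ≠ 0)
    (hT : tridiagonal (radialOp c a e) t g r (LinearMap.mulLeft ℝ Θ) = 0) (w : V) :
    tridiagonal (G.adjMatrix ℝ) t g r (diagonal fun v => Θ (G.dist w v)) = 0 := by
  obtain ⟨μ, hμ⟩ := h.exists_smul_radialMatrix_mul_self hle hD hdr he hΘ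
  exact tridiagonal_diagonal_eq_zero G.isSymm_adjMatrix radialMatrix_isSymm hΘ₀ hμ
    (h.tridiagonal_mul_pow_mul_single hT) w

end HasRadialCoeffs

end RadialMatrix

/-! ### Classical parameters -/

theorem gaussBracket_succ (b : ℝ) (i : ℕ) : gaussBracket b (i + 1) = 1 + b * gaussBracket b i := by
  rw [gaussBracket, gaussBracket, geom_sum_succ, add_comm]

theorem gaussBracket_zero (b : ℝ) : gaussBracket b 0 = 0 := by simp [gaussBracket]

theorem gaussBracket_one (b : ℝ) : gaussBracket b 1 = 1 := by simp [gaussBracket]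

theorem gaussBracket_two (b : ℝ) : gaussBracket b 2 = 1 + b := by
  simp [gaussBracket, Finset.sum_range_succ]

theorem gaussBracket_three (b : ℝ) : gaussBracket b 3 = 1 + b + b ^ 2 := by
  simp [gaussBracket, Finset.sum_range_succ]

theorem gaussBracket_four (b : ℝ) : gaussBracket b 4 = 1 + b + b ^ 2 + b ^ 3 := by
  simp [gaussBracket, Finset.sum_range_succ]

/-- The Gaussian bracket `[i]` extended to integers `i` by its closed form, for `b ≠ 1`. -/
noncomputable def bracket (b : ℝ) (i : ℤ) : ℝ := (b ^ i - 1) / (b - 1)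

/-- The classical intersection number `cᵢ = [i](1 + α[i-1])`, for integers `i`. -/
noncomputable def classicalC (b α : ℝ) (i : ℤ) : ℝ := bracket b i * (1 + α * bracket b (i - 1))

/-- The classical intersection number `aᵢ` of a graph with `a₁ = 0`, for integers `i`. -/
noncomputable def classicalA (b α : ℝ) (i : ℤ) : ℝ :=
  -α * (1 + b) * bracket b i * bracket b (i - 1)

/-- The classical intersection number `bᵢ = (s - [i])(β - α[i])` with `s = [D]`, for integers `i`;
when `a₁ = 0`, the parameter `β` equals `1 + α - αs`. -/
noncomputable def classicalB (b α s : ℝ) (i : ℤ) : ℝ :=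
  (s - bracket b i) * (1 + α - α * s - α * bracket b i)

section Classical

variable {b α s : ℝ} {i : ℤ}

theorem bracket_natCast (hb : b ≠ 1) (i : ℕ) : bracket b i = gaussBracket b i := by
  rw [bracket, gaussBracket, geom_sum_eq hb, zpow_natCast]

theorem bracket_zero : bracket b 0 = 0 := by simp [bracket]

theorem bracket_add_one (hb₀ : b ≠ 0) (hb₁ : b ≠ 1) : bracket b (i + 1) = 1 + b * bracket b i := by
  have := sub_ne_zero.2 hb₁
  rw [bracket, bracket, zpow_add_one₀ hb₀]
  field_simp
  ring

theorem bracket_sub_one (hb₀ : b ≠ 0) (hb₁ : b ≠ 1) :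
    bracket b (i - 1) = (bracket b i - 1) / b := by
  have := bracket_add_one (i := i - 1) hb₀ hb₁
  rw [sub_add_cancel] at this
  rw [this]
  field_simp
  ring

theorem classicalC_add_classicalA_add_classicalB (hb₀ : b ≠ 0) (hb₁ : b ≠ 1) :
    classicalC b α i + classicalA b α i + classicalB b α s i = s * (1 + α - α * s) := by
  rw [classicalC, classicalA, classicalB, bracket_sub_one hb₀ hb₁]
  field_simp
  ring

theorem bracket_one (hb : b ≠ 1) : bracket b 1 = 1 := by
  simpa [gaussBracket_one] using bracket_natCast hb 1

theorem bracket_two (hb : b ≠ 1) : bracket b 2 = 1 + b := by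
  simpa [gaussBracket_two] using bracket_natCast hb 2

theorem bracket_three (hb : b ≠ 1) : bracket b 3 = 1 + b + b ^ 2 := by
  simpa [gaussBracket_three] using bracket_natCast hb 3

theorem bracket_four (hb : b ≠ 1) : bracket b 4 = 1 + b + b ^ 2 + b ^ 3 := by
  simpa [gaussBracket_four] using bracket_natCast hb 4

theorem classicalC_one (hb : b ≠ 1) : classicalC b α 1 = 1 := by
  norm_num [classicalC, bracket_zero, bracket_one hb]

theorem classicalC_two (hb : b ≠ 1) : classicalC b α 2 = (1 + b) * (1 + α) := by
  norm_num [classicalC, bracket_one hb, bracket_two hb]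

theorem classicalC_three (hb : b ≠ 1) :
    classicalC b α 3 = (1 + b + b ^ 2) * (1 + α * (1 + b)) := by
  norm_num [classicalC, bracket_two hb, bracket_three hb]

theorem classicalC_four (hb : b ≠ 1) :
    classicalC b α 4 = (1 + b + b ^ 2 + b ^ 3) * (1 + α * (1 + b + b ^ 2)) := by
  norm_num [classicalC, bracket_three hb, bracket_four hb]

theorem classicalA_zero : classicalA b α 0 = 0 := by simp [classicalA, bracket_zero]

theorem classicalA_one : classicalA b α 1 = 0 := by simp [classicalA, bracket_zero]

theorem classicalA_two (hb : b ≠ 1) : classicalA b α 2 = -α * (1 + b) ^ 2 := by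
  norm_num [classicalA, bracket_one hb, bracket_two hb]
  ring

theorem classicalA_three (hb : b ≠ 1) :
    classicalA b α 3 = -α * (1 + b) ^ 2 * (1 + b + b ^ 2) := by
  norm_num [classicalA, bracket_two hb, bracket_three hb]
  ring

theorem exists_tridiagonal_radialOp_classical (hb₀ : b ≠ 0) (hb₁ : b ≠ 1) : ∃ r,
    tridiagonal (radialOp (classicalC b α) (classicalA b α) (classicalB b α s))
      (b + b⁻¹ + 1) (α * (1 + b) / b) r (LinearMap.mulLeft ℝ fun i => b ^ (-i)) = 0 := by
  refine ⟨s * (1 + α - α * s) * (b + b⁻¹ + 1 + 1) +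
    (s - 1) * (1 - α * s) * ((1 + b) * (1 + α)) * (1 - (b + b⁻¹ + 1) / b),
    tridiagonal_radialOp_eq_zero (b := b) (by field_simp; ring) (fun i => ?_) (fun i => ?_)
    fun i => ?_⟩
  · simp only [classicalA, add_sub_cancel_right, bracket_add_one hb₀ hb₁, bracket_sub_one hb₀ hb₁]
    field_simp
    ring
  · simp only [classicalA, classicalB, classicalC, add_sub_cancel_right, bracket_add_one hb₀ hb₁,
      bracket_sub_one hb₀ hb₁]
    field_simp
    ring
  · rw [← zpow_one_add₀ hb₀]
    congr 1
    ring

/-- The eigenvalue is `θ = b₁/b - 1`, where `b₁ = k - 1`, and `hθ` says `θ ≠ k`. -/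
theorem exists_radialOp_classical_eq_smul {k : ℝ} (hb₀ : b ≠ 0) (hb₁ : b ≠ 1)
    (hks : k = s * (1 + α - α * s)) (hk : k ≠ 0) (hθ : k * (1 - b) ≠ 1 + b) : ∃ ξ θ : ℝ,
    radialOp (classicalC b α) (classicalA b α) (classicalB b α s) (fun i => b ^ (-i) + ξ) =
      θ • (fun i => b ^ (-i) + ξ) ∧ 1 + ξ ≠ 0 := by
  have hb₁' := sub_ne_zero.2 hb₁
  have hθ' := sub_ne_zero.2 hθ
  obtain ⟨ξ, hξ⟩ : ∃ ξ, ξ * (k * (1 - b) - (1 + b)) = 1 + b := ⟨_, div_mul_cancel₀ _ hθ'⟩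
  refine ⟨ξ, (k - 1) / b - 1, ?_, fun h => ?_⟩
  · ext i
    have hpow : b ^ (-i) * (1 + (b - 1) * bracket b i) = 1 := by
      rw [bracket, mul_div_cancel₀ _ hb₁', zpow_neg]
      have := zpow_ne_zero i hb₀
      field_simp
      ring
    have hsub : b ^ (-(i - 1)) = b * b ^ (-i) := by rw [← zpow_one_add₀ hb₀]; congr 1; ring
    have hadd : b ^ (-(i + 1)) = b ^ (-i) / b := by
      rw [div_eq_mul_inv, ← zpow_sub_one₀ hb₀]; congr 1; ring
    have hK : k * b ^ (-i) + classicalC b α i * (b * b ^ (-i) - b ^ (-i)) +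
        classicalB b α s i * (b ^ (-i) / b - b ^ (-i)) =
        ((k - 1) / b - 1) * b ^ (-i) + (1 + b) / b := by
      rw [classicalC, classicalB, bracket_sub_one hb₀ hb₁, hks]
      field_simp
      linear_combination (b + 1) * hpow
    have hsum := classicalC_add_classicalA_add_classicalB (α := α) (s := s) (i := i) hb₀ hb₁
    simp only [radialOp_apply, Pi.smul_apply, smul_eq_mul, hsub, hadd]
    linear_combination hK + (b ^ (-i) + ξ) * (hsum - hks) - hξ / b -
      ξ * (1 + k) * mul_inv_cancel₀ hb₀
  · have : k * (1 - b) = 0 := by linear_combination (k * (1 - b) - (1 + b)) * h - hξ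
    exact (mul_ne_zero hk (sub_ne_zero.2 hb₁.symm)) this

end Classical

/-! ### Balanced pairs of neighbourhoods -/

/-- The difference between the weights under `κ` of the neighbours of `u` at distance `j` from `v`
and of the neighbours of `v` at distance `j` from `u`. -/
noncomputable def imbalance [Fintype V] (G : SimpleGraph V) (κ : V → ℝ) (u v : V) (j : ℕ) : ℝ :=
  ∑ y ∈ nbrs G u v j, κ y - ∑ y ∈ nbrs G v u j, κ y

namespace HasRadialCoeffs

open Matrix

variable [Fintype V] [DecidableEq V] [DecidableRel G.Adj] {c a e : ℤ → ℝ} {κ : V → ℝ} {t g r : ℝ}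

theorem adjMatrix_mul_diagonal_mul_pow_sub_apply (h : HasRadialCoeffs G c a e) (κ : V → ℝ) (n : ℕ)
    (u v : V) :
    (G.adjMatrix ℝ * diagonal κ * G.adjMatrix ℝ ^ n -
      G.adjMatrix ℝ ^ n * diagonal κ * G.adjMatrix ℝ) u v =
      walkCount c a e n (G.dist u v - 1) * imbalance G κ u v (G.dist u v - 1) +
      walkCount c a e n (G.dist u v) * imbalance G κ u v (G.dist u v) +
      walkCount c a e n (G.dist u v + 1) * imbalance G κ u v (G.dist u v + 1) := by
  have hentry : ∀ u v, (G.adjMatrix ℝ * diagonal κ * G.adjMatrix ℝ ^ n) u v =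
      (G.adjMatrix ℝ *ᵥ fun y => κ y * walkCount c a e n (G.dist v y)) u := fun u v => by
    rw [Matrix.mul_assoc, mul_apply]
    simp only [mulVec, dotProduct, diagonal_mul, h.adjMatrix_pow_apply]
  have htrans : (G.adjMatrix ℝ ^ n * diagonal κ * G.adjMatrix ℝ) u v =
      (G.adjMatrix ℝ * diagonal κ * G.adjMatrix ℝ ^ n) v u := by
    rw [← transpose_apply (_ * _) v u]
    simp only [transpose_mul, transpose_pow, diagonal_transpose, SimpleGraph.transpose_adjMatrix,
      Matrix.mul_assoc]
  rw [Matrix.sub_apply, htrans, hentry, hentry, adjMatrix_mulVec_mul_radial h.connected,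
    adjMatrix_mulVec_mul_radial h.connected, G.dist_comm (u := v)]
  simp only [imbalance]
  ring

theorem adjMatrix_pow_mul_diagonal_sub_apply (h : HasRadialCoeffs G c a e) (κ : V → ℝ) (n : ℕ)
    (u v : V) :
    (G.adjMatrix ℝ ^ n * diagonal κ - diagonal κ * G.adjMatrix ℝ ^ n) u v =
      walkCount c a e n (G.dist u v) * (κ v - κ u) := by
  rw [Matrix.sub_apply, mul_diagonal, diagonal_mul, h.adjMatrix_pow_apply, G.dist_comm]
  ring

theorem tridiagonal_diagonal_apply (h : HasRadialCoeffs G c a e) (u v : V) :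
    tridiagonal (G.adjMatrix ℝ) t g r (diagonal κ) u v =
      (walkCount c a e 3 (G.dist u v) - g * walkCount c a e 2 (G.dist u v) -
        r * walkCount c a e 1 (G.dist u v)) * (κ v - κ u) +
      t * (walkCount c a e 2 (G.dist u v - 1) * imbalance G κ u v (G.dist u v - 1) +
        walkCount c a e 2 (G.dist u v) * imbalance G κ u v (G.dist u v) +
        walkCount c a e 2 (G.dist u v + 1) * imbalance G κ u v (G.dist u v + 1)) := by
  have hcomm : tridiagonal (G.adjMatrix ℝ) t g r (diagonal κ) =
      (G.adjMatrix ℝ ^ 3 * diagonal κ - diagonal κ * G.adjMatrix ℝ ^ 3) +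
      t • (G.adjMatrix ℝ * diagonal κ * G.adjMatrix ℝ ^ 2 -
        G.adjMatrix ℝ ^ 2 * diagonal κ * G.adjMatrix ℝ) -
      g • (G.adjMatrix ℝ ^ 2 * diagonal κ - diagonal κ * G.adjMatrix ℝ ^ 2) -
      r • (G.adjMatrix ℝ ^ 1 * diagonal κ - diagonal κ * G.adjMatrix ℝ ^ 1) := by
    rw [tridiagonal_apply, pow_one]
    module
  rw [hcomm]
  simp only [Matrix.sub_apply (_ - _), Matrix.sub_apply (_ + _), Matrix.add_apply,
    Matrix.smul_apply, h.adjMatrix_pow_mul_diagonal_sub_apply,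
    h.adjMatrix_mul_diagonal_mul_pow_sub_apply, smul_eq_mul]
  ring

theorem mul_tridiagonal_add_tridiagonal_mul_apply (h : HasRadialCoeffs G c a e) (u v : V) :
    (G.adjMatrix ℝ * tridiagonal (G.adjMatrix ℝ) t g r (diagonal κ) +
      tridiagonal (G.adjMatrix ℝ) t g r (diagonal κ) * G.adjMatrix ℝ) u v =
      (walkCount c a e 4 (G.dist u v) - g * walkCount c a e 3 (G.dist u v) -
        r * walkCount c a e 2 (G.dist u v)) * (κ v - κ u) +
      (((t - 1) * walkCount c a e 3 (G.dist u v - 1) + g * walkCount c a e 2 (G.dist u v - 1)) *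
          imbalance G κ u v (G.dist u v - 1) +
        ((t - 1) * walkCount c a e 3 (G.dist u v) + g * walkCount c a e 2 (G.dist u v)) *
          imbalance G κ u v (G.dist u v) +
        ((t - 1) * walkCount c a e 3 (G.dist u v + 1) + g * walkCount c a e 2 (G.dist u v + 1)) *
          imbalance G κ u v (G.dist u v + 1)) := by
  have hanti : G.adjMatrix ℝ * tridiagonal (G.adjMatrix ℝ) t g r (diagonal κ) +
      tridiagonal (G.adjMatrix ℝ) t g r (diagonal κ) * G.adjMatrix ℝ =
      (G.adjMatrix ℝ ^ 4 * diagonal κ - diagonal κ * G.adjMatrix ℝ ^ 4) +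
      (t - 1) • (G.adjMatrix ℝ * diagonal κ * G.adjMatrix ℝ ^ 3 -
        G.adjMatrix ℝ ^ 3 * diagonal κ * G.adjMatrix ℝ) -
      g • (G.adjMatrix ℝ ^ 3 * diagonal κ - diagonal κ * G.adjMatrix ℝ ^ 3) +
      g • (G.adjMatrix ℝ * diagonal κ * G.adjMatrix ℝ ^ 2 -
        G.adjMatrix ℝ ^ 2 * diagonal κ * G.adjMatrix ℝ) -
      r • (G.adjMatrix ℝ ^ 2 * diagonal κ - diagonal κ * G.adjMatrix ℝ ^ 2) := by
    rw [mul_tridiagonal_add_tridiagonal_mul]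
    module
  rw [hanti]
  simp only [Matrix.sub_apply (_ + _), Matrix.add_apply, Matrix.smul_apply,
    h.adjMatrix_pow_mul_diagonal_sub_apply, h.adjMatrix_mul_diagonal_mul_pow_sub_apply, smul_eq_mul]
  ring

theorem mul_imbalance_two_of_dist_eq_two (h : HasRadialCoeffs G c a e) (ha₀ : a 0 = 0)
    (ha₁ : a 1 = 0) (hc₁ : c 1 = 1) (hc₂ : c 2 ≠ 0)
    (hT : tridiagonal (G.adjMatrix ℝ) t g r (diagonal κ) = 0) (huv : G.dist u v = 2) :
    t * imbalance G κ u v 2 = (g - a 2) * (κ v - κ u) := by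
  have := h.tridiagonal_diagonal_apply (t := t) (g := g) (r := r) (κ := κ) u v
  norm_num [hT, huv, walkCount_succ, walkCount_zero, ha₀, ha₁, hc₁] at this
  apply mul_left_cancel₀ hc₂
  linear_combination -this

theorem mul_imbalance_two_of_dist_eq_three (h : HasRadialCoeffs G c a e) (hc₁ : c 1 = 1)
    (hc₂ : c 2 ≠ 0) (hT : tridiagonal (G.adjMatrix ℝ) t g r (diagonal κ) = 0)
    (huv : G.dist u v = 3) : t * imbalance G κ u v 2 = c 3 * (κ u - κ v) := by
  have := h.tridiagonal_diagonal_apply (t := t) (g := g) (r := r) (κ := κ) u v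
  norm_num [hT, huv, walkCount_succ, walkCount_zero, hc₁] at this
  apply mul_left_cancel₀ hc₂
  linear_combination -this

theorem mul_imbalance_add_of_dist_eq_three (h : HasRadialCoeffs G c a e) (ha₀ : a 0 = 0)
    (ha₁ : a 1 = 0) (hc₁ : c 1 = 1) (hc₂ : c 2 ≠ 0)
    (hT : tridiagonal (G.adjMatrix ℝ) t g r (diagonal κ) = 0) (huv : G.dist u v = 3) :
    ((t - 1) * a 2 + g) * imbalance G κ u v 2 + (t - 1) * c 3 * imbalance G κ u v 3 =
      c 3 * (a 2 + a 3 - g) * (κ u - κ v) := by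
  have := h.mul_tridiagonal_add_tridiagonal_mul_apply (t := t) (g := g) (r := r) (κ := κ) u v
  norm_num [hT, huv, walkCount_succ, walkCount_zero, ha₀, ha₁, hc₁] at this
  apply mul_left_cancel₀ hc₂
  linear_combination -this

theorem mul_imbalance_three_of_dist_eq_four (h : HasRadialCoeffs G c a e) (hc₁ : c 1 = 1)
    (hc₂ : c 2 ≠ 0) (hc₃ : c 3 ≠ 0) (hT : tridiagonal (G.adjMatrix ℝ) t g r (diagonal κ) = 0)
    (huv : G.dist u v = 4) : (t - 1) * imbalance G κ u v 3 = c 4 * (κ u - κ v) := by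
  have := h.mul_tridiagonal_add_tridiagonal_mul_apply (t := t) (g := g) (r := r) (κ := κ) u v
  norm_num [hT, huv, walkCount_succ, walkCount_zero, hc₁] at this
  apply mul_left_cancel₀ (mul_ne_zero hc₃ hc₂)
  linear_combination -this

end HasRadialCoeffs

namespace HasRadialCoeffs

variable [Fintype V] {c a e : ℤ → ℝ} {i : ℕ}

theorem card_nbrs_of_dist_eq_add_one (h : HasRadialCoeffs G c a e) (huv : G.dist u v = i + 1) :
    #(nbrs G u v i) = c (i + 1) := by
  have := h.card_sub u v
  rw [G.dist_comm, huv] at this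
  simpa using this

theorem sum_nbrs_eq_of_no_triangle (h : HasRadialCoeffs G c a e) (φ : ℤ → ℝ)
    (htri : ∀ v, G.dist x v = 1 → G.dist y v ≠ 1)
    (hxy : G.dist x y = 1) (hyu : G.dist y u = i) (hxu : G.dist x u = i + 1) :
    ∑ v ∈ nbrs G x u i, φ (G.dist y v) = φ 0 + (c (i + 1) - 1) * φ 2 := by
  classical
  have hy : y ∈ nbrs G x u i := by grind
  have htwo : ∀ v ∈ (nbrs G x u i).erase y, φ (G.dist y v) = φ 2 := by
    intro v hv
    rw [Finset.mem_erase, mem_nbrs] at hv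
    have hyv := htri v hv.2.1
    have : G.dist y v ≠ 0 := fun h₀ => hv.1 (h.connected.dist_eq_zero_iff.1 h₀).symm
    have := h.connected
    rw [show G.dist y v = 2 by grind, Nat.cast_ofNat]
  rw [← Finset.add_sum_erase _ _ hy, Finset.sum_congr rfl htwo, Finset.sum_const,
    nsmul_eq_mul, Finset.cast_card_erase_of_mem hy, h.card_nbrs_of_dist_eq_add_one hxu,
    SimpleGraph.dist_self, Nat.cast_zero]

theorem sum_nbrs_eq_of_dist_eq (h : HasRadialCoeffs G c a e) (φ : ℤ → ℝ)
    (hxy : G.dist x y = 1) (hyu : G.dist y u = i + 1) (hxu : G.dist x u = i + 1 + 1) :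
    ∑ v ∈ nbrs G u x (i + 1), φ (G.dist y v) = c (i + 1 + 1) * φ (i + 1 + 1) +
      c (i + 1) * (φ i - φ (i + 1 + 1)) +
      #{v ∈ nbrs G u x (i + 1) | G.dist y v = i + 1} * (φ (i + 1) - φ (i + 1 + 1)) := by
  have hG := h.connected
  have hterm : ∀ v ∈ nbrs G u x (i + 1), φ (G.dist y v) = φ (i + 1 + 1) +
      ((if G.dist y v = i then φ i - φ (i + 1 + 1) else 0) +
      if G.dist y v = i + 1 then φ (i + 1) - φ (i + 1 + 1) else 0) := by
    intro v hv
    rcases (by grind : G.dist y v = i ∨ G.dist y v = i + 1 ∨ G.dist y v = i + 1 + 1) with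
      hyv | hyv | hyv <;> rw [hyv] <;> split_ifs <;> first | omega | (push_cast; ring)
  have hfilter : {v ∈ nbrs G u x (i + 1) | G.dist y v = i} = nbrs G u y i := by
    ext v
    grind
  rw [Finset.sum_congr rfl hterm, Finset.sum_add_distrib, Finset.sum_add_distrib,
    ← Finset.sum_filter, ← Finset.sum_filter, hfilter]
  simp only [Finset.sum_const, nsmul_eq_mul]
  rw [h.card_nbrs_of_dist_eq_add_one (i := i) (by grind),
    h.card_nbrs_of_dist_eq_add_one (i := i + 1) (by grind)]
  push_cast
  ring

theorem dist_ne_of_sum_nbrs_sub_sum_nbrs_eq (h : HasRadialCoeffs G c a e) {φ : ℤ → ℝ}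
    (hφ : φ (i + 1) ≠ φ (i + 1 + 1)) (htri : ∀ v, G.dist x v = 1 → G.dist y v ≠ 1)
    (hxy : G.dist x y = 1) (hyu : G.dist y u = i + 1) (hxu : G.dist x u = i + 1 + 1)
    (hsum : ∑ v ∈ nbrs G u x (i + 1), φ (G.dist y v) - ∑ v ∈ nbrs G x u (i + 1), φ (G.dist y v) =
      c (i + 1 + 1) * φ (i + 1 + 1) + c (i + 1) * (φ i - φ (i + 1 + 1)) -
        (φ 0 + (c (i + 1 + 1) - 1) * φ 2))
    (huz : G.dist u z = 1) (hxz : G.dist x z = i + 1) : G.dist y z ≠ i + 1 := by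
  intro hyz
  rw [h.sum_nbrs_eq_of_dist_eq φ hxy hyu hxu, h.sum_nbrs_eq_of_no_triangle φ htri hxy hyu hxu]
    at hsum
  push_cast at hsum
  have hmul : (#{v ∈ nbrs G u x (i + 1) | G.dist y v = i + 1} : ℝ) *
      (φ (i + 1) - φ (i + 1 + 1)) = 0 := by linear_combination hsum
  have hcard := (mul_eq_zero.1 hmul).resolve_right (sub_ne_zero.2 hφ)
  rw [Nat.cast_eq_zero, Finset.card_filter_eq_zero_iff] at hcard
  exact hcard (x := z) (by grind) hyz

end HasRadialCoeffs

/-- The neighbours of `u` are distributed over three levels around `v`; for `u = v` the truncated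
level `0 - 1` and the level `0` are both empty. -/
theorem card_nbrs_add_card_nbrs_add_card_nbrs [Fintype V] (hG : G.Connected) (u v : V) :
    #(nbrs G u v (G.dist v u - 1)) + #(nbrs G u v (G.dist v u)) +
      #(nbrs G u v (G.dist v u + 1)) = #(nbrs G u u 1) := by
  simp only [nbrs, Finset.card_filter, ← Finset.sum_add_distrib]
  refine Finset.sum_congr rfl fun w _ => ?_
  have := hG.dist_triangle (u := v) (v := u) (w := w)
  have := hG.dist_triangle (u := v) (v := w) (w := u)
  have := G.dist_comm (u := w) (v := u)
  have : G.dist v u = 0 → G.dist u w = G.dist v w := fun h₀ => by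
    rw [hG.dist_eq_zero_iff.1 h₀]
  split_ifs <;> omega

theorem exists_intCast_eq_of_sq_add_mul_add_eq_zero {q : ℚ} {m n : ℤ}
    (h : q ^ 2 + m * q + n = 0) : ∃ z : ℤ, (z : ℚ) = q := by
  refine IsIntegrallyClosed.isIntegral_iff.1 ⟨Polynomial.X ^ 2 + Polynomial.C m * Polynomial.X +
    Polynomial.C n, by monicity!, ?_⟩
  simp only [Polynomial.eval₂_add, Polynomial.eval₂_mul, Polynomial.eval₂_pow, Polynomial.eval₂_X,
    Polynomial.eval₂_C]
  exact h

/-- `b` is rational because `b = c - c₃a/a₃`, and it is a root of a monic quadratic over `ℤ`. -/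
theorem exists_intCast_eq {b : ℝ} {c a c₃ a₃ : ℕ} (ha : 0 < a)
    (ha_eq : (a : ℝ) = (1 + b) * (1 + b - c)) (ha₃ : (a₃ : ℝ) = (1 + b + b ^ 2) * a)
    (hc₃ : (c₃ : ℝ) = (1 + b + b ^ 2) * (c - b)) : ∃ m : ℤ, (m : ℝ) = b := by
  have hpos : 0 < 1 + b + b ^ 2 := by nlinarith [sq_nonneg (b + 1 / 2)]
  have : (0 : ℝ) < a := by exact_mod_cast ha
  obtain ⟨q, rfl⟩ : ∃ q : ℚ, (q : ℝ) = b := by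
    refine ⟨c - c₃ * a / a₃, ?_⟩
    push_cast
    rw [ha₃, hc₃]
    field_simp
    ring
  have hroot : q ^ 2 + ((2 - c : ℤ) : ℚ) * q + ((1 - c - a : ℤ) : ℚ) = 0 := by
    have : (a : ℚ) = (1 + q) * (1 + q - c) := by exact_mod_cast ha_eq
    push_cast
    linear_combination -this
  obtain ⟨m, rfl⟩ := exists_intCast_eq_of_sq_add_mul_add_eq_zero hroot
  exact ⟨m, by simp⟩

theorem le_neg_two_of_intersection_numbers {b : ℝ} {c a c₃ a₃ : ℕ} (ha : 0 < a) (hc₃ : 0 < c₃)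
    (ha_eq : (a : ℝ) = (1 + b) * (1 + b - c)) (ha₃_eq : (a₃ : ℝ) = (1 + b + b ^ 2) * a)
    (hc₃_eq : (c₃ : ℝ) = (1 + b + b ^ 2) * (c - b)) : b ≤ -2 := by
  obtain ⟨m, rfl⟩ := exists_intCast_eq ha ha_eq ha₃_eq hc₃_eq
  have ha_eq' : (a : ℤ) = (1 + m) * (1 + m - c) := by exact_mod_cast ha_eq
  have hc₃_eq' : (c₃ : ℤ) = (1 + m + m ^ 2) * (c - m) := by exact_mod_cast hc₃_eq
  have hcm : 0 < (c : ℤ) - m :=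
    pos_of_mul_pos_right (by omega : 0 < (1 + m + m ^ 2) * (c - m)) (by nlinarith)
  have : 1 + m < 0 := by
    by_contra! hm
    have := mul_nonpos_of_nonneg_of_nonpos hm (by omega : 1 + m - c ≤ 0)
    omega
  exact_mod_cast (by omega : m ≤ -2)

/-! ### Classical parameters with `a₁ = 0` and `a₂ ≠ 0` -/

/-- A distance-regular graph of diameter `D ≥ 3` with classical parameters `(D, b, α, β)` and
intersection numbers `a₁ = 0` and `a₂ ≠ 0`. -/
structure IsClassicalTriangleFree (G : SimpleGraph V) (D : ℕ) (p : ℕ → ℕ → ℕ → ℕ) (b α β : ℝ) :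
    Prop where
  connected : G.Connected
  three_le : 3 ≤ D
  dist_le : ∀ x y, G.dist x y ≤ D
  exists_dist_eq : ∃ x y, G.dist x y = D
  isDistRegularWith : G.IsDistRegularWith D p
  hasClassicalParams : HasClassicalParams D p b α β
  p_one_one_one : p 1 1 1 = 0
  p_two_one_two : p 2 1 2 ≠ 0

/-- The weight `b^{-∂(w,v)}` of `v` with respect to the base point `w`. -/
noncomputable def weight (G : SimpleGraph V) (b : ℝ) (w v : V) : ℝ := b ^ (-(G.dist w v : ℤ))

namespace IsClassicalTriangleFree

variable {D : ℕ} {p : ℕ → ℕ → ℕ → ℕ} {b α β : ℝ}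

theorem b_ne_zero (h : IsClassicalTriangleFree G D p b α β) : b ≠ 0 := h.hasClassicalParams.1

theorem p_two_one_one (h : IsClassicalTriangleFree G D p b α β) :
    (p 2 1 1 : ℝ) = (1 + b) * (1 + α) := by
  simpa [gaussBracket_one, gaussBracket_two] using
    h.hasClassicalParams.2.2.1 2 (by linarith [h.three_le])

theorem p_three_one_two (h : IsClassicalTriangleFree G D p b α β) :
    (p 3 1 2 : ℝ) = (1 + b + b ^ 2) * (1 + α * (1 + b)) := by
  simpa [gaussBracket_two, gaussBracket_three] using h.hasClassicalParams.2.2.1 3 h.three_le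

theorem p_three_one_two_eq_mul (h : IsClassicalTriangleFree G D p b α β) :
    (p 3 1 2 : ℝ) = (1 + b + b ^ 2) * (p 2 1 1 - b) := by
  rw [h.p_three_one_two, h.p_two_one_one]
  ring

section Counting

variable {i j : ℕ}

theorem card_nbrs [Fintype V] (h : IsClassicalTriangleFree G D p b α β) (hj : j ≤ D) :
    #(nbrs G x y j) = p (G.dist x y) 1 j := by
  have := h.three_le
  rw [← h.isDistRegularWith _ 1 j (h.dist_le x y) (by omega) hj x y rfl, ← Set.ncard_coe_finset]
  simp [nbrs]

theorem card_nbrs_dist_add_one [Fintype V] (h : IsClassicalTriangleFree G D p b α β) (x y : V) :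
    #(nbrs G x y (G.dist x y + 1)) = p (G.dist x y) 1 (G.dist x y + 1) := by
  rcases (h.dist_le x y).eq_or_lt with hxy | hxy
  · have hp : (p D 1 (D + 1) : ℝ) = 0 := by
      rw [h.hasClassicalParams.2.2.2 D le_rfl, sub_self, zero_mul]
    rw [hxy, Nat.cast_eq_zero.1 hp, Finset.card_eq_zero]
    ext v
    have := h.dist_le y v
    simp only [mem_nbrs, Finset.notMem_empty, iff_false, not_and]
    omega
  · exact h.card_nbrs hxy

theorem card_nbrs_self_one [Fintype V] (h : IsClassicalTriangleFree G D p b α β) (x : V) :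
    #(nbrs G x x 1) = p 0 1 1 := by
  simpa using h.card_nbrs (x := x) (y := x) (by linarith [h.three_le] : 1 ≤ D)

theorem p_sub_add_p_self_add_p_add [Finite V] (h : IsClassicalTriangleFree G D p b α β)
    (hi : i ≤ D) :
    p i 1 (i - 1) + p i 1 i + p i 1 (i + 1) = p 0 1 1 := by
  cases nonempty_fintype V
  obtain ⟨x, y, hxy⟩ := exists_dist_eq_of_le h.connected h.exists_dist_eq hi
  have hsum := card_nbrs_add_card_nbrs_add_card_nbrs h.connected x y
  rwa [G.dist_comm, h.card_nbrs_dist_add_one, h.card_nbrs_self_one, hxy,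
    h.card_nbrs (by omega), h.card_nbrs hi, hxy] at hsum

theorem p_add_one_one_pos [Finite V] (h : IsClassicalTriangleFree G D p b α β) (hi : i + 1 ≤ D) :
    0 < p (i + 1) 1 i := by
  cases nonempty_fintype V
  obtain ⟨x, y, hxy⟩ := exists_dist_eq_of_le h.connected h.exists_dist_eq hi
  obtain ⟨z, hxz, hzy⟩ := exists_dist_eq_one_of_dist_eq_add_one h.connected hxy
  rw [← hxy, ← h.card_nbrs (by omega), Finset.card_pos]
  exact ⟨z, by grind⟩

theorem p_one_add_one_pos [Finite V] (h : IsClassicalTriangleFree G D p b α β) (hi : i < D) :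
    0 < p i 1 (i + 1) := by
  cases nonempty_fintype V
  obtain ⟨x, y, hxy⟩ := exists_dist_eq_of_le h.connected h.exists_dist_eq hi
  obtain ⟨z, hxz, hzy⟩ := exists_dist_eq_one_of_dist_eq_add_one h.connected hxy
  rw [← hzy, ← h.card_nbrs (by omega), Finset.card_pos]
  exact ⟨x, by grind⟩

end Counting

theorem beta_eq [Finite V] (h : IsClassicalTriangleFree G D p b α β) :
    β = 1 + α - α * gaussBracket b D := by
  obtain ⟨-, -, hc, hb⟩ := h.hasClassicalParams
  have hD := h.three_le
  have hk := hb 0 (by omega)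
  have hb₁ := hb 1 (by omega)
  have hc₁ := hc 1 (by omega)
  have hsum : ((p 1 1 0 + p 1 1 1 + p 1 1 2 : ℕ) : ℝ) = p 0 1 1 := by
    exact_mod_cast h.p_sub_add_p_self_add_p_add (by omega : 1 ≤ D)
  simp only [gaussBracket_zero, gaussBracket_one, tsub_self] at hk hb₁ hc₁
  push_cast [h.p_one_one_one, hc₁, hb₁, hk] at hsum
  linear_combination -hsum

theorem p_zero_one_one [Finite V] (h : IsClassicalTriangleFree G D p b α β) :
    (p 0 1 1 : ℝ) = gaussBracket b D * (1 + α - α * gaussBracket b D) := by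
  have hk := h.hasClassicalParams.2.2.2 0 (by omega)
  rw [gaussBracket_zero] at hk
  rw [← h.beta_eq]
  linear_combination hk

theorem p_add_one_one_add_one [Finite V] {i : ℕ} (h : IsClassicalTriangleFree G D p b α β)
    (hi : i + 1 ≤ D) :
    (p (i + 1) 1 (i + 1) : ℝ) = -α * (1 + b) * gaussBracket b (i + 1) * gaussBracket b i := by
  have hc := h.hasClassicalParams.2.2.1 (i + 1) hi
  have hb := h.hasClassicalParams.2.2.2 (i + 1) hi
  have hsum : (p (i + 1) 1 i : ℝ) + p (i + 1) 1 (i + 1) + p (i + 1) 1 (i + 1 + 1) = p 0 1 1 := by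
    exact_mod_cast h.p_sub_add_p_self_add_p_add hi
  rw [Nat.add_sub_cancel] at hc
  rw [hc, hb, h.p_zero_one_one, h.beta_eq, gaussBracket_succ] at hsum
  rw [gaussBracket_succ]
  linear_combination hsum

theorem p_two_one_two_eq [Finite V] (h : IsClassicalTriangleFree G D p b α β) :
    (p 2 1 2 : ℝ) = -α * (1 + b) ^ 2 := by
  rw [h.p_add_one_one_add_one (i := 1) (by linarith [h.three_le]), gaussBracket_one,
    gaussBracket_two]
  ring

theorem p_three_one_three [Finite V] (h : IsClassicalTriangleFree G D p b α β) :
    (p 3 1 3 : ℝ) = (1 + b + b ^ 2) * p 2 1 2 := by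
  rw [h.p_add_one_one_add_one (i := 2) h.three_le, h.p_two_one_two_eq, gaussBracket_two,
    gaussBracket_three]
  ring

theorem p_two_one_two_eq_mul [Finite V] (h : IsClassicalTriangleFree G D p b α β) :
    (p 2 1 2 : ℝ) = (1 + b) * (1 + b - p 2 1 1) := by
  rw [h.p_two_one_two_eq, h.p_two_one_one]
  ring

theorem b_le_neg_two [Finite V] (h : IsClassicalTriangleFree G D p b α β) : b ≤ -2 :=
  le_neg_two_of_intersection_numbers (Nat.pos_of_ne_zero h.p_two_one_two)
    (h.p_add_one_one_pos h.three_le) h.p_two_one_two_eq_mul h.p_three_one_three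
    h.p_three_one_two_eq_mul

theorem b_ne_one [Finite V] (h : IsClassicalTriangleFree G D p b α β) : b ≠ 1 := by
  linarith [h.b_le_neg_two]

theorem hasRadialCoeffs [Fintype V] (h : IsClassicalTriangleFree G D p b α β) :
    HasRadialCoeffs G (classicalC b α) (classicalA b α) (classicalB b α (gaussBracket b D)) := by
  have hsub : ∀ u v, (#(nbrs G u v (G.dist v u - 1)) : ℝ) = classicalC b α (G.dist v u) := by
    intro u v
    have hD := h.dist_le v u
    rw [h.card_nbrs (by omega), G.dist_comm (u := u), h.hasClassicalParams.2.2.1 _ hD]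
    rcases G.dist v u with _ | i
    · simp [classicalC, bracket_zero, gaussBracket_zero]
    · rw [classicalC, Nat.add_sub_cancel, Nat.cast_add_one, add_sub_cancel_right,
        bracket_natCast h.b_ne_one, ← Nat.cast_add_one, bracket_natCast h.b_ne_one]
  have hadd : ∀ u v, (#(nbrs G u v (G.dist v u + 1)) : ℝ) =
      classicalB b α (gaussBracket b D) (G.dist v u) := by
    intro u v
    rw [G.dist_comm, h.card_nbrs_dist_add_one, h.hasClassicalParams.2.2.2 _ (h.dist_le u v),
      h.beta_eq, classicalB, bracket_natCast h.b_ne_one]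
  refine ⟨h.connected, hsub, fun u v => ?_, hadd⟩
  have hsum : (#(nbrs G u v (G.dist v u - 1)) : ℝ) + #(nbrs G u v (G.dist v u)) +
      #(nbrs G u v (G.dist v u + 1)) = p 0 1 1 := by
    exact_mod_cast (card_nbrs_add_card_nbrs_add_card_nbrs h.connected u v).trans
      (h.card_nbrs_self_one u)
  rw [hsub, hadd, h.p_zero_one_one,
    ← classicalC_add_classicalA_add_classicalB (i := G.dist v u) h.b_ne_zero h.b_ne_one] at hsum
  linear_combination hsum

theorem exists_tridiagonal_eq_zero [Fintype V] [DecidableEq V] [DecidableRel G.Adj]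
    (h : IsClassicalTriangleFree G D p b α β) : ∃ r, ∀ w,
      tridiagonal (G.adjMatrix ℝ) (b + b⁻¹ + 1) (α * (1 + b) / b) r
        (Matrix.diagonal (weight G b w)) = 0 := by
  have hb := h.b_le_neg_two
  have hk : (0 : ℝ) < p 0 1 1 := by
    exact_mod_cast h.p_one_add_one_pos (by linarith [h.three_le] : 0 < D)
  obtain ⟨r, hr⟩ := exists_tridiagonal_radialOp_classical (α := α) (s := gaussBracket b D)
    h.b_ne_zero h.b_ne_one
  obtain ⟨ξ, θ, hθ, hξ⟩ := exists_radialOp_classical_eq_smul h.b_ne_zero h.b_ne_one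
    h.p_zero_one_one hk.ne' (by nlinarith)
  have hT : tridiagonal (radialOp (classicalC b α) (classicalA b α)
      (classicalB b α (gaussBracket b D))) (b + b⁻¹ + 1) (α * (1 + b) / b) r
      (LinearMap.mulLeft ℝ fun i => b ^ (-i) + ξ) = 0 := by
    have hadd : LinearMap.mulLeft ℝ (fun i : ℤ => b ^ (-i) + ξ) =
        LinearMap.mulLeft ℝ (fun i : ℤ => b ^ (-i)) + ξ • 1 := by
      ext φ i
      simp [add_mul]
    rw [hadd, tridiagonal_add_smul_one, hr]
  have he : ∀ i : ℕ, i < D → classicalB b α (gaussBracket b D) i ≠ 0 := by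
    intro i hi
    rw [classicalB, bracket_natCast h.b_ne_one, ← h.beta_eq, ← h.hasClassicalParams.2.2.2 i hi.le]
    exact_mod_cast (h.p_one_add_one_pos hi).ne'
  refine ⟨r, fun w => ?_⟩
  have hadd : (Matrix.diagonal fun v => b ^ (-(G.dist w v : ℤ)) + ξ) =
      Matrix.diagonal (weight G b w) + ξ • (1 : Matrix V V ℝ) := by
    simp only [weight, Matrix.smul_one_eq_diagonal, Matrix.diagonal_add]
  rw [← tridiagonal_add_smul_one ξ, ← hadd]
  exact h.hasRadialCoeffs.tridiagonal_radial_eq_zero h.dist_le h.exists_dist_eq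
    h.isDistRegularWith he hθ (by simpa using hξ) hT w

end IsClassicalTriangleFree

theorem pow_sub_dist_eq_mul_weight {b : ℝ} {n : ℕ} (hb : b ≠ 0) (h : G.dist w v ≤ n) :
    b ^ (n - G.dist w v) = b ^ n * weight G b w v := by
  rw [weight, pow_sub₀ b hb h, zpow_neg, zpow_natCast]

theorem weightSum_nbrs_eq_mul_sum [Fintype V] {b : ℝ} {j : ℕ} (hG : G.Connected) (hb : b ≠ 0)
    (hwx : G.dist w x ≤ 4) :
    weightSum G b w (nbrs G x y j) = b ^ 5 * ∑ v ∈ nbrs G x y j, weight G b w v := by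
  rw [weightSum, Finset.mul_sum]
  exact Finset.sum_congr rfl fun v hv => pow_sub_dist_eq_mul_weight hb (by grind)

theorem weightSum_sub_weightSum_eq [Fintype V] {b q : ℝ} {j : ℕ} (hG : G.Connected) (hb : b ≠ 0)
    (hwx : G.dist w x ≤ 4) (hwy : G.dist w y ≤ 4)
    (h : imbalance G (weight G b w) x y j = q * (weight G b w x - weight G b w y)) :
    weightSum G b w (nbrs G x y j) - weightSum G b w (nbrs G y x j) =
      q * (b ^ (5 - G.dist w x) - b ^ (5 - G.dist w y)) := by
  rw [weightSum_nbrs_eq_mul_sum hG hb hwx, weightSum_nbrs_eq_mul_sum hG hb hwy,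
    pow_sub_dist_eq_mul_weight hb (by omega), pow_sub_dist_eq_mul_weight hb (by omega)]
  rw [imbalance] at h
  linear_combination b ^ 5 * h

theorem add_inv_ne_zero {b : ℝ} (hb : b ≠ 0) : b + b⁻¹ ≠ 0 := by
  have : b ^ 2 + 1 ≠ 0 := by positivity
  intro h₀
  field_simp at h₀
  exact this (by linear_combination h₀)

theorem add_inv_add_one_ne_zero {b : ℝ} (hb : b ≠ 0) : b + b⁻¹ + 1 ≠ 0 := by
  have : b ^ 2 + b + 1 ≠ 0 := by nlinarith [sq_nonneg (b + 1 / 2)]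
  intro h₀
  field_simp at h₀
  exact this (by linear_combination h₀)

namespace IsClassicalTriangleFree

variable {D : ℕ} {p : ℕ → ℕ → ℕ → ℕ} {b α β : ℝ}

theorem classicalC_two_ne_zero [Finite V] (h : IsClassicalTriangleFree G D p b α β) :
    classicalC b α 2 ≠ 0 := by
  rw [classicalC_two h.b_ne_one, ← h.p_two_one_one]
  exact_mod_cast (h.p_add_one_one_pos (by linarith [h.three_le] : 1 + 1 ≤ D)).ne'

theorem classicalC_three_ne_zero [Finite V] (h : IsClassicalTriangleFree G D p b α β) :
    classicalC b α 3 ≠ 0 := by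
  rw [classicalC_three h.b_ne_one, ← h.p_three_one_two]
  exact_mod_cast (h.p_add_one_one_pos (by linarith [h.three_le] : 2 + 1 ≤ D)).ne'

theorem imbalance_two_of_dist_eq_two [Fintype V] (h : IsClassicalTriangleFree G D p b α β) (w : V)
    (huv : G.dist u v = 2) : imbalance G (weight G b w) u v 2 =
      -α * (1 + b) * (weight G b w u - weight G b w v) := by
  classical
  have hb := h.b_ne_zero
  obtain ⟨r, hr⟩ := h.exists_tridiagonal_eq_zero
  have := h.hasRadialCoeffs.mul_imbalance_two_of_dist_eq_two classicalA_zero classicalA_one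
    (classicalC_one h.b_ne_one) h.classicalC_two_ne_zero (hr w) huv
  have hq : α * (1 + b) / b - classicalA b α 2 = (b + b⁻¹ + 1) * (α * (1 + b)) := by
    rw [classicalA_two h.b_ne_one]
    field_simp
    ring
  apply mul_left_cancel₀ (add_inv_add_one_ne_zero hb)
  linear_combination this + (weight G b w v - weight G b w u) * hq

theorem imbalance_two_of_dist_eq_three [Fintype V] (h : IsClassicalTriangleFree G D p b α β) (w : V)
    (huv : G.dist u v = 3) : imbalance G (weight G b w) u v 2 =
      b * (1 + α * (1 + b)) * (weight G b w u - weight G b w v) := by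
  classical
  have hb := h.b_ne_zero
  obtain ⟨r, hr⟩ := h.exists_tridiagonal_eq_zero
  have := h.hasRadialCoeffs.mul_imbalance_two_of_dist_eq_three
    (classicalC_one h.b_ne_one) h.classicalC_two_ne_zero (hr w) huv
  have hq : classicalC b α 3 = (b + b⁻¹ + 1) * (b * (1 + α * (1 + b))) := by
    rw [classicalC_three h.b_ne_one]
    field_simp
    ring
  apply mul_left_cancel₀ (add_inv_add_one_ne_zero hb)
  linear_combination this + (weight G b w u - weight G b w v) * hq

theorem imbalance_three_of_dist_eq_three [Fintype V] (h : IsClassicalTriangleFree G D p b α β)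
    (w : V) (huv : G.dist u v = 3) : imbalance G (weight G b w) u v 3 =
      -α * (1 + b) ^ 3 * (weight G b w u - weight G b w v) := by
  classical
  have hb := h.b_ne_zero
  obtain ⟨r, hr⟩ := h.exists_tridiagonal_eq_zero
  have := h.hasRadialCoeffs.mul_imbalance_add_of_dist_eq_three classicalA_zero classicalA_one
    (classicalC_one h.b_ne_one) h.classicalC_two_ne_zero (hr w) huv
  have hq : classicalC b α 3 * (classicalA b α 2 + classicalA b α 3 - α * (1 + b) / b) -
      ((b + b⁻¹) * classicalA b α 2 + α * (1 + b) / b) * (b * (1 + α * (1 + b))) =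
      (b + b⁻¹) * classicalC b α 3 * (-α * (1 + b) ^ 3) := by
    rw [classicalC_three h.b_ne_one, classicalA_two h.b_ne_one, classicalA_three h.b_ne_one]
    field_simp
    ring
  rw [add_sub_cancel_right, h.imbalance_two_of_dist_eq_three w huv] at this
  apply mul_left_cancel₀ (mul_ne_zero (add_inv_ne_zero hb) h.classicalC_three_ne_zero)
  linear_combination this + (weight G b w u - weight G b w v) * hq

theorem imbalance_three_of_dist_eq_four [Fintype V] (h : IsClassicalTriangleFree G D p b α β)
    (w : V) (huv : G.dist u v = 4) : imbalance G (weight G b w) u v 3 =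
      b * (1 + b) * (1 + α * (1 + b + b ^ 2)) * (weight G b w u - weight G b w v) := by
  classical
  have hb := h.b_ne_zero
  obtain ⟨r, hr⟩ := h.exists_tridiagonal_eq_zero
  have := h.hasRadialCoeffs.mul_imbalance_three_of_dist_eq_four
    (classicalC_one h.b_ne_one) h.classicalC_two_ne_zero h.classicalC_three_ne_zero (hr w) huv
  rw [add_sub_cancel_right] at this
  have hq : classicalC b α 4 =
      (b + b⁻¹) * (b * (1 + b) * (1 + α * (1 + b + b ^ 2))) := by
    rw [classicalC_four h.b_ne_one]
    field_simp
    ring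
  apply mul_left_cancel₀ (add_inv_ne_zero hb)
  linear_combination this + (weight G b w u - weight G b w v) * hq

theorem no_triangle [Finite V] (h : IsClassicalTriangleFree G D p b α β) (hxy : G.dist x y = 1)
    (hyz : G.dist y z = 1) : G.dist x z ≠ 1 := by
  cases nonempty_fintype V
  intro hxz
  have hcard := h.card_nbrs (x := x) (y := y) (by linarith [h.three_le] : 1 ≤ D)
  rw [hxy, h.p_one_one_one, Finset.card_eq_zero] at hcard
  exact Finset.notMem_empty z (hcard ▸ mem_nbrs.2 ⟨hxz, hyz⟩)

theorem zpow_neg_add_one_ne [Finite V] (h : IsClassicalTriangleFree G D p b α β) (i : ℤ) :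
    b ^ (-i) ≠ b ^ (-(i + 1)) := by
  have hb := h.b_ne_zero
  rw [neg_add, ← sub_eq_add_neg, zpow_sub_one₀ hb]
  intro heq
  have := zpow_ne_zero (-i) hb
  field_simp at heq
  exact h.b_ne_one heq

theorem no_parallelogram_two [Finite V] (h : IsClassicalTriangleFree G D p b α β)
    (hxy : G.dist x y = 1) (huz : G.dist u z = 1) (hxu : G.dist x u = 3) (hxz : G.dist x z = 2)
    (hyu : G.dist y u = 2) : G.dist y z ≠ 2 := by
  cases nonempty_fintype V
  have hb := h.b_ne_zero
  refine h.hasRadialCoeffs.dist_ne_of_sum_nbrs_sub_sum_nbrs_eq (i := 1) (φ := fun i => b ^ (-i))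
    (h.zpow_neg_add_one_ne _) (fun v hxv hyv => h.no_triangle hxy hyv hxv) hxy hyu hxu ?_ huz hxz
  refine (h.imbalance_two_of_dist_eq_three (u := u) (v := x) y (by grind)).trans ?_
  rw [weight, weight, hyu, G.dist_comm, hxy]
  norm_num [classicalC_two h.b_ne_one, classicalC_three h.b_ne_one, zpow_neg]
  field_simp
  ring

theorem no_parallelogram_three [Finite V] (h : IsClassicalTriangleFree G D p b α β)
    (hxy : G.dist x y = 1) (huz : G.dist u z = 1) (hxu : G.dist x u = 4) (hxz : G.dist x z = 3)
    (hyu : G.dist y u = 3) : G.dist y z ≠ 3 := by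
  cases nonempty_fintype V
  have hb := h.b_ne_zero
  refine h.hasRadialCoeffs.dist_ne_of_sum_nbrs_sub_sum_nbrs_eq (i := 2) (φ := fun i => b ^ (-i))
    (h.zpow_neg_add_one_ne _) (fun v hxv hyv => h.no_triangle hxy hyv hxv) hxy hyu hxu ?_ huz hxz
  refine (h.imbalance_three_of_dist_eq_four (u := u) (v := x) y (by grind)).trans ?_
  rw [weight, weight, hyu, G.dist_comm, hxy]
  norm_num [classicalC_three h.b_ne_one, classicalC_four h.b_ne_one, zpow_neg]
  field_simp
  ring

theorem isBRigid [Finite V] (h : IsClassicalTriangleFree G D p b α β) : IsBRigid G where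
  connected := h.connected
  no_triangle := h.no_triangle
  no_parallelogram := by
    intro i hi₂ hi₃ x y z u hxy hzu hxu hxz hyz hyu
    rw [G.dist_comm] at hzu
    obtain rfl | rfl : i = 2 ∨ i = 3 := by omega
    · exact h.no_parallelogram_two hxy hzu hxu hxz hyu hyz
    · exact h.no_parallelogram_three hxy hzu hxu hxz hyu hyz
  ncard_Bset := by
    have hB : ∀ x y, (Bset G x y).ncard = p (G.dist x y) 1 (G.dist x y + 1) := fun x y => by
      cases nonempty_fintype V
      rw [← h.card_nbrs_dist_add_one, ← Set.ncard_coe_finset]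
      simp [nbrs, Bset]
    intro x y x' y' hdist
    rw [hB, hB, hdist]
  nonempty_Aset := by
    intro x y hxy
    cases nonempty_fintype V
    have hcard := h.card_nbrs (x := x) (y := y) (by linarith [h.three_le] : 2 ≤ D)
    rw [hxy] at hcard
    obtain ⟨v, hv⟩ := Finset.card_pos.1 (hcard ▸ Nat.pos_of_ne_zero h.p_two_one_two)
    rw [mem_nbrs, ← hxy] at hv
    exact ⟨v, hv⟩

theorem isBalanced [Fintype V] (h : IsClassicalTriangleFree G D p b α β) :
    IsBalanced G b (p 2 1 1) (p 2 1 2) (p 3 1 2) (p 3 1 3) where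
  toIsBRigid := h.isBRigid
  b_le := h.b_le_neg_two
  one_le_c := h.p_add_one_one_pos (by linarith [h.three_le])
  a_pos := Nat.pos_of_ne_zero h.p_two_one_two
  a_eq := h.p_two_one_two_eq_mul
  a₃_eq := h.p_three_one_three
  c₃_eq := h.p_three_one_two_eq_mul
  card_c₂ hxy := hxy ▸ h.card_nbrs (by linarith [h.three_le])
  card_a₂ hxy := hxy ▸ h.card_nbrs (h.dist_le _ _)
  card_c₃ hxy := hxy ▸ h.card_nbrs (by linarith [h.three_le])
  card_a₃ hxy := hxy ▸ h.card_nbrs (h.dist_le _ _)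
  balanced_a₂ w hxy hwx hwy := by
    refine weightSum_sub_weightSum_eq h.connected h.b_ne_zero hwx hwy ?_
    rw [h.imbalance_two_of_dist_eq_two w hxy, h.p_two_one_one]
    ring
  balanced_c₃ w hxy hwx hwy := by
    refine weightSum_sub_weightSum_eq h.connected h.b_ne_zero hwx hwy ?_
    rw [h.imbalance_two_of_dist_eq_three w hxy, h.p_two_one_one]
    ring
  balanced_a₃ w hxy hwx hwy := by
    refine weightSum_sub_weightSum_eq h.connected h.b_ne_zero hwx hwy ?_
    rw [h.imbalance_three_of_dist_eq_three w hxy, h.p_two_one_two_eq]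
    ring

end IsClassicalTriangleFree

end

/-- Under the classical-parameter hypotheses with `D ≥ 3`, `a₁ = 0`,
`a₂ ≠ 0`, for `∂(x,y) = 3` the subgraph induced on `Δ = [x, C]` is regular with valency
`a₃ + c₃` (`= p³₁₃ + p³₁₂`), weak-geodetically closed, has diameter `3`, and contains
`x` and `y`. -/
theorem delta_is_regular_wgc [Fintype V] (G : SimpleGraph V) (hconn : G.Connected)
    (D : ℕ) (hD : 3 ≤ D)
    (hdiam_le : ∀ x y : V, G.dist x y ≤ D) (hdiam : ∃ x y : V, G.dist x y = D)
    (p : ℕ → ℕ → ℕ → ℕ) (hdr : G.IsDistRegularWith D p)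
    (b α β : ℝ) (hcp : HasClassicalParams D p b α β)
    (ha1 : p 1 1 1 = 0) (ha2 : p 2 1 2 ≠ 0)
    (x y : V) (hxy : G.dist x y = 3) :
    -- Δ induces a regular subgraph with valency a₃ + c₃
    (∀ u ∈ Delta G x y, {w | w ∈ Delta G x y ∧ G.Adj u w}.ncard = p 3 1 3 + p 3 1 2) ∧
    -- Δ is weak-geodetically closed
    (∀ u v w : V, u ∈ Delta G x y → w ∈ Delta G x y →
      G.dist u v + G.dist v w ≤ G.dist u w + 1 → v ∈ Delta G x y) ∧
    -- the induced subgraph on Δ has diameter 3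
    (∀ u v : Delta G x y, (G.induce (Delta G x y)).dist u v ≤ 3) ∧
    (∃ u v : Delta G x y, (G.induce (Delta G x y)).dist u v = 3) ∧
    x ∈ Delta G x y ∧ y ∈ Delta G x y := by
  have h : IsBalanced G b (p 2 1 1) (p 2 1 2) (p 3 1 2) (p 3 1 3) :=
    IsClassicalTriangleFree.isBalanced ⟨hconn, hD, hdiam_le, hdiam, hdr, hcp, ha1, ha2⟩
  have hclosed : ∀ {u v w}, u ∈ BHull G x y → w ∈ BHull G x y →
      G.dist u v + G.dist v w ≤ G.dist u w + 1 → v ∈ BHull G x y :=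
    h.isHullTransportable_three.mem_BHull_of_weakGeodetic h.toIsBRigid le_rfl hxy
  have hdist : ∀ u v : BHull G x y, (G.induce (BHull G x y)).dist u v = G.dist (u : V) v :=
    dist_induce_eq hconn fun hu hw hv => hclosed hu hw (by omega)
  rw [h.Delta_eq_BHull hxy]
  refine ⟨fun u hu => h.ncard_nbrs_in_BHull hxy hu, fun u v w hu hw => hclosed hu hw,
    fun u v => ?_, ⟨⟨x, left_mem_BHull hconn⟩, ⟨y, right_mem_BHull⟩, (hdist _ _).trans hxy⟩,
    left_mem_BHull hconn, right_mem_BHull⟩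
  rw [hdist]
  exact h.isHullTransportable_three.dist_le h.toIsBRigid le_rfl hxy u.2 v.2
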